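/- arXiv:math/0612621 — 4 statements merged into one kernel-verified Lean document; each statement's English description precedes it below -/
import Mathlib

section
/- Let g = f^k · σ in a unique factorization domain of power series with f irreducible, σ coprime to f, k ≥ 1, and let H be a derivation. If f^{2k−1} divides 3(H(g))^2 − 2g·H(H(g)), then f divides H(f), and consequently g divides H(g). -/
open MvPowerSeries in
theorem aux_mem_span {σ : Type*} {K : Type*} [Field K] (S : Finset σ) :
    ∀ f : MvPowerSeries σ K, (∀ m : σ →₀ ℕ, (∀ i ∈ S, m i = 0) → coeff m f = 0) →
      f ∈ Ideal.span (Set.range (X : σ → MvPowerSeries σ K)) := by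
  classical
  induction S using Finset.induction_on with
  | empty =>
    intro f hf
    have : f = 0 := by ext m; simpa using hf m (by simp)
    simp [this]
  | insert i S hi ih =>
    intro f hf
    let f0 : MvPowerSeries σ K := fun m => if m i = 0 then coeff m f else 0
    have hc : ∀ m, coeff m f0 = if m i = 0 then coeff m f else 0 := fun m => rfl
    have h1 : (X i : MvPowerSeries σ K) ∣ f - f0 := by
      rw [X_dvd_iff]
      intro m hm
      simp [hc, hm]
    have h2 : f0 ∈ Ideal.span (Set.range (X : σ → MvPowerSeries σ K)) := by
      apply ih
      intro m hm
      rw [hc]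
      split_ifs with h
      · apply hf
        intro j hj
        rcases Finset.mem_insert.1 hj with rfl | hj
        · exact h
        · exact hm j hj
      · rfl
    have h3 : f - f0 ∈ Ideal.span (Set.range (X : σ → MvPowerSeries σ K)) :=
      Ideal.mem_of_dvd _ h1 (Ideal.subset_span ⟨i, rfl⟩)
    simpa using Ideal.add_mem _ h3 h2

open MvPowerSeries in
theorem aux_maximalIdeal {σ : Type*} [Fintype σ] {K : Type*} [Field K] :
    IsLocalRing.maximalIdeal (MvPowerSeries σ K) =
      Ideal.span (Set.range (X : σ → MvPowerSeries σ K)) := by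
  apply le_antisymm
  · intro f hf
    apply aux_mem_span Finset.univ
    intro m hm
    have : m = 0 := by ext i; simpa using hm i (by simp)
    subst this
    rw [IsLocalRing.mem_maximalIdeal, mem_nonunits_iff, isUnit_iff_constantCoeff] at hf
    simpa using hf
  · rw [Ideal.span_le]
    rintro _ ⟨i, rfl⟩
    simp [isUnit_iff_constantCoeff]

theorem aux_complete {σ : Type*} [Fintype σ] {K : Type*} [Field K] :
    IsAdicComplete (IsLocalRing.maximalIdeal (MvPowerSeries σ K)) (MvPowerSeries σ K) := by
  rw [aux_maximalIdeal]; infer_instance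

/-- An irreducible power series which is regular in the last variable is prime. -/
theorem aux_prime {A : Type*} [CommRing A] [IsDomain A] [IsLocalRing A]
    [IsAdicComplete (IsLocalRing.maximalIdeal A) A] [UniqueFactorizationMonoid A]
    (f : PowerSeries A) (hf : Irreducible f) (hr : f.map (IsLocalRing.residue A) ≠ 0) :
    Prime f := by
  obtain ⟨P, h, H⟩ := PowerSeries.exists_isWeierstrassFactorization hr
  have hmon := H.isDistinguishedAt.monic
  have hfP : Associated (P : PowerSeries A) f := by
    obtain ⟨u, hu⟩ := H.isUnit
    exact ⟨u, by rw [hu, H.eq_mul]⟩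
  have hPirr : Irreducible (P : PowerSeries A) := hfP.irreducible_iff.2 hf
  have hmapP : P.map (IsLocalRing.residue A) = Polynomial.X ^ P.natDegree :=
    H.isDistinguishedAt.map_eq_X_pow
  have key : ∀ a b : Polynomial A, P = a * b → IsUnit (a : PowerSeries A) → IsUnit a := by
    intro a b hab ha
    have hlead : IsUnit a.leadingCoeff := by
      apply IsUnit.of_mul_eq_one b.leadingCoeff
      rw [← Polynomial.leadingCoeff_mul, ← hab]; exact hmon
    have ha0 : IsUnit (a.coeff 0) := by
      have := PowerSeries.isUnit_iff_constantCoeff.1 ha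
      simpa using this
    have hdvd : a.map (IsLocalRing.residue A) ∣ Polynomial.X ^ P.natDegree :=
      ⟨b.map (IsLocalRing.residue A), by rw [← hmapP, hab, Polynomial.map_mul]⟩
    obtain ⟨i, hi, hass⟩ := (dvd_prime_pow Polynomial.prime_X _).1 hdvd
    have hi0 : i = 0 := by
      by_contra hne
      have h1 : Polynomial.X ∣ a.map (IsLocalRing.residue A) :=
        (dvd_pow_self _ hne).trans hass.symm.dvd
      rw [Polynomial.X_dvd_iff, Polynomial.coeff_map] at h1
      exact (ha0.map (IsLocalRing.residue A)).ne_zero h1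
    subst hi0
    rw [pow_zero, associated_one_iff_isUnit] at hass
    have hdeg : a.natDegree = 0 := by
      have h1 := Polynomial.natDegree_eq_zero_of_isUnit hass
      rwa [Polynomial.natDegree_map_of_leadingCoeff_ne_zero] at h1
      exact (hlead.map (IsLocalRing.residue A)).ne_zero
    rw [Polynomial.eq_C_of_natDegree_eq_zero hdeg]
    exact Polynomial.isUnit_C.2 ha0
  have hirr : Irreducible P := by
    refine ⟨fun hu => hPirr.not_isUnit ?_, fun a b hab => ?_⟩
    · exact hu.map (Polynomial.coeToPowerSeries.ringHom (R := A))
    · rcases hPirr.isUnit_or_isUnit (a := a) (b := b) (by rw [hab, Polynomial.coe_mul]) with h | h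
      · exact Or.inl (key a b hab h)
      · exact Or.inr (key b a (by rw [hab, mul_comm]) h)
  have hprime : Prime P := UniqueFactorizationMonoid.irreducible_iff_prime.1 hirr
  have h1 : (Ideal.span {P}).IsPrime := (Ideal.span_singleton_prime hprime.ne_zero).2 hprime
  rw [← Ideal.span_singleton_prime hf.ne_zero]
  rw [← Ideal.Quotient.isDomain_iff_prime] at h1 ⊢
  exact (H.algEquivQuotient).symm.toMulEquiv.isDomain _

open MvPowerSeries in
theorem aux_coord {n : ℕ} {K : Type*} [Field K] [Infinite K]
    (f : MvPowerSeries (Fin (n + 1)) K) (hf : f ≠ 0) :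
    ∃ e : MvPowerSeries (Fin (n + 1)) K ≃* MvPowerSeries (Fin (n + 1)) K,
      (finSuccEquiv K n (e f)).map (IsLocalRing.residue _) ≠ 0 := by
  classical
  obtain ⟨m0, hm0⟩ : ∃ m, coeff m f ≠ 0 := by
    by_contra! h
    exact hf (by ext m; simpa using h m)
  set d := m0.degree with hd
  let p : MvPolynomial (Fin (n + 1)) K :=
    MvPolynomial.homogeneousComponent d (truncTotal (d + 1) f)
  have hpc : ∀ m, p.coeff m = if m.degree = d then coeff m f else 0 := by
    intro m
    simp only [p, MvPolynomial.coeff_homogeneousComponent]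
    split_ifs with h
    · rw [coeff_truncTotal _ (by omega)]
    · rfl
  have hp : p ≠ 0 := by
    intro h
    have := hpc m0
    rw [h] at this
    simp [← hd] at this
    exact hm0 this.symm
  obtain ⟨c, hc⟩ : ∃ c : Fin (n + 1) → K, MvPolynomial.eval c (MvPolynomial.X 0 * p) ≠ 0 := by
    by_contra! h
    have : MvPolynomial.X 0 * p = 0 := MvPolynomial.funext (by simpa using h)
    simp [hp] at this
  rw [map_mul, MvPolynomial.eval_X] at hc
  have hc0 : c 0 ≠ 0 := left_ne_zero_of_mul hc
  have hcp := right_ne_zero_of_mul hc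
  let a : Fin (n + 1) → MvPowerSeries (Fin (n + 1)) K :=
    Fin.cons (C (c 0) * X 0) (fun i => X i.succ + C (c i.succ) * X 0)
  let b : Fin (n + 1) → MvPowerSeries (Fin (n + 1)) K :=
    Fin.cons (C (c 0)⁻¹ * X 0) (fun i => X i.succ - C (c i.succ * (c 0)⁻¹) * X 0)
  have ha : HasSubst a := hasSubst_of_constantCoeff_zero fun s => by
    refine Fin.cases ?_ (fun i => ?_) s <;> simp [a]
  have hb : HasSubst b := hasSubst_of_constantCoeff_zero fun s => by
    refine Fin.cases ?_ (fun i => ?_) s <;> simp [b]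
  have hC : ∀ (r : K), (C r : MvPowerSeries (Fin (n + 1)) K) = algebraMap K _ r := fun r => rfl
  have hab : ∀ s, substAlgHom (R := K) hb (a s) = X s := by
    intro s
    refine Fin.cases ?_ (fun i => ?_) s
    · simp only [a, Fin.cons_zero, map_mul, hC, AlgHom.commutes, substAlgHom_X, b]
      rw [← mul_assoc, ← map_mul, mul_inv_cancel₀ hc0, map_one, one_mul]
    · simp only [a, Fin.cons_succ, Fin.cons_zero, map_mul, map_add, hC, AlgHom.commutes,
        substAlgHom_X, b]
      ring
  have hba : ∀ s, substAlgHom (R := K) ha (b s) = X s := by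
    intro s
    refine Fin.cases ?_ (fun i => ?_) s
    · simp only [a, Fin.cons_zero, map_mul, hC, AlgHom.commutes, substAlgHom_X, b]
      rw [← mul_assoc, ← map_mul, inv_mul_cancel₀ hc0, map_one, one_mul]
    · simp only [a, Fin.cons_succ, Fin.cons_zero, map_mul, map_sub, hC, AlgHom.commutes,
        substAlgHom_X, b]
      have : algebraMap K (MvPowerSeries (Fin (n + 1)) K) (c 0)⁻¹ * algebraMap K _ (c 0) = 1 := by
        rw [← map_mul, inv_mul_cancel₀ hc0, map_one]
      linear_combination (-algebraMap K _ (c i.succ) * X 0) * this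
  let e : MvPowerSeries (Fin (n + 1)) K ≃* MvPowerSeries (Fin (n + 1)) K :=
    { toFun := substAlgHom (R := K) ha
      invFun := substAlgHom (R := K) hb
      left_inv := fun x => by
        rw [substAlgHom_comp_substAlgHom_apply, coe_substAlgHom]
        simp only [hab]
        rw [subst_self]; rfl
      right_inv := fun x => by
        rw [substAlgHom_comp_substAlgHom_apply, coe_substAlgHom]
        simp only [hba]
        rw [subst_self]; rfl
      map_mul' := map_mul _ }
  refine ⟨e, fun h0 => hcp ?_⟩
  have he : e f = subst a f := by
    change substAlgHom (R := K) ha f = _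
    rw [coe_substAlgHom]
  let ψ : MvPowerSeries (Fin (n + 1)) K →+* PowerSeries K :=
    (PowerSeries.map (constantCoeff (σ := Fin n) (R := K))).comp
      (finSuccEquiv K n).toRingEquiv.toRingHom
  have hψc : ∀ x, PowerSeries.coeff d (ψ x) = coeff (Finsupp.cons d 0) x := by
    intro x
    simp [ψ, ← coeff_coeff_finSuccEquiv]
  have hψa : ∀ s, ψ (a s) = PowerSeries.C (c s) * PowerSeries.X := by
    intro s
    refine Fin.cases ?_ (fun i => ?_) s
    · simp [ψ, a]
    · simp [ψ, a]
  have hzero : coeff (Finsupp.cons d 0) (e f) = 0 := by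
    have := congrArg (PowerSeries.coeff d) h0
    rw [PowerSeries.coeff_map, map_zero, IsLocalRing.residue_eq_zero_iff,
      IsLocalRing.mem_maximalIdeal, mem_nonunits_iff, isUnit_iff_constantCoeff] at this
    rw [← coeff_coeff_finSuccEquiv]
    simpa using this
  rw [he, coeff_subst ha] at hzero
  have hterm : ∀ m : Fin (n + 1) →₀ ℕ,
      coeff m f • coeff (Finsupp.cons d 0) (m.prod fun s e => (a s) ^ e) =
        p.coeff m * ∏ i, c i ^ m i := by
    intro m
    rw [← hψc, hpc, Finsupp.prod_fintype _ _ (by simp), map_prod]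
    simp only [map_pow, hψa, mul_pow]
    rw [Finset.prod_mul_distrib, Finset.prod_pow_eq_pow_sum]
    simp only [← map_pow, ← map_prod]
    rw [PowerSeries.coeff_C_mul, PowerSeries.coeff_X_pow, ← Finsupp.degree_eq_sum]
    by_cases h : m.degree = d
    · simp [h]
    · simp [h, Ne.symm h]
  rw [finsum_congr hterm, finsum_eq_sum_of_support_subset (s := p.support)] at hzero
  · rw [MvPolynomial.eval_eq']
    exact hzero
  · intro m hm
    simp only [Function.mem_support] at hm
    simpa using left_ne_zero_of_mul hm

theorem aux_ufd_fin {K : Type*} [Field K] [Infinite K] (n : ℕ) :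
    UniqueFactorizationMonoid (MvPowerSeries (Fin n) K) := by
  induction n with
  | zero =>
    exact (MvPowerSeries.isEmptyEquiv (Fin 0) K).symm.toMulEquiv.uniqueFactorizationMonoid
      inferInstance
  | succ n ih =>
    have := aux_complete (σ := Fin n) (K := K)
    have : IsDomain (MvPowerSeries (Fin n) K) := NoZeroDivisors.to_isDomain _
    have : IsDomain (MvPowerSeries (Fin (n + 1)) K) := NoZeroDivisors.to_isDomain _
    apply UniqueFactorizationMonoid.of_exists_prime_factors
    intro x hx
    refine WfDvdMonoid.exists_factors x hx |>.imp fun s hs => ⟨fun f hfs => ?_, hs.2⟩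
    have hf := hs.1 f hfs
    obtain ⟨e, he⟩ := aux_coord f hf.ne_zero
    have h1 : Irreducible (MvPowerSeries.finSuccEquiv K n (e f)) :=
      (MulEquiv.irreducible_iff (MvPowerSeries.finSuccEquiv K n).toMulEquiv).2
        ((MulEquiv.irreducible_iff e).2 hf)
    have h2 := aux_prime _ h1 he
    exact (MulEquiv.prime_iff e).1
      ((MulEquiv.prime_iff (MvPowerSeries.finSuccEquiv K n).toMulEquiv).1 h2)

theorem aux_ufd {σ : Type*} [Fintype σ] {K : Type*} [Field K] [Infinite K] :
    UniqueFactorizationMonoid (MvPowerSeries σ K) :=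
  (MvPowerSeries.renameEquiv K (Fintype.equivFin σ)).symm.toMulEquiv.uniqueFactorizationMonoid
    (aux_ufd_fin _)

/-- In the formal power series ring over a field of characteristic zero, let
`H` be a derivation and `g ≠ 0`. Suppose that for every decomposition
`g = f^k * σ` with `f` irreducible, `k ≥ 1` and `σ` coprime to `f`, the power
`f^{2k−1}` divides `3 (H g)² − 2 g H(H g)`. Then every such irreducible factor
`f` divides `H f`, and consequently `g` divides `H g`. -/
theorem stmt_3 {σ : Type*} [Fintype σ] {K : Type*} [Field K] [CharZero K]
    (H : Derivation K (MvPowerSeries σ K) (MvPowerSeries σ K))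
    (g : MvPowerSeries σ K) (hg0 : g ≠ 0)
    (hdvd : ∀ (f s : MvPowerSeries σ K) (k : ℕ), 1 ≤ k → Irreducible f →
      ¬ f ∣ s → g = f ^ k * s →
      f ^ (2 * k - 1) ∣ 3 * H g ^ 2 - 2 * g * H (H g)) :
    (∀ (f s : MvPowerSeries σ K) (k : ℕ), 1 ≤ k → Irreducible f →
      ¬ f ∣ s → g = f ^ k * s → f ∣ H f) ∧ g ∣ H g := by
  have hufd : UniqueFactorizationMonoid (MvPowerSeries σ K) := aux_ufd
  have part1 : ∀ (f s : MvPowerSeries σ K) (k : ℕ), 1 ≤ k → Irreducible f →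
      ¬ f ∣ s → g = f ^ k * s → f ∣ H f := by
    intro f s k hk hf hs hg
    have hp : Prime f := UniqueFactorizationMonoid.irreducible_iff_prime.1 hf
    have hd := hdvd f s k hk hf hs hg
    obtain ⟨j, rfl⟩ : ∃ j, k = j + 1 := ⟨k - 1, by omega⟩
    have hpow : ∀ i : ℕ, f * H (f ^ i) = i * f ^ i * H f := by
      intro i
      rw [Derivation.leibniz_pow]
      rcases i with _ | i
      · simp
      · simp only [Nat.add_sub_cancel, nsmul_eq_mul, smul_eq_mul]; ring
    set w := (j + 1 : MvPowerSeries σ K) * s * H f + f * H s with hw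
    have hHg : H g = f ^ j * w := by
      apply mul_left_cancel₀ hp.ne_zero
      have h1 := hpow (j + 1)
      rw [hg, Derivation.leibniz, smul_eq_mul, smul_eq_mul, hw]
      push_cast at h1
      linear_combination s * h1
    have hHHg : f * H (H g) = f ^ j * (j * H f * w + f * H w) := by
      have h1 := hpow j
      rw [hHg, Derivation.leibniz, smul_eq_mul, smul_eq_mul]
      linear_combination w * h1
    have hE : 3 * H g ^ 2 - 2 * g * H (H g) =
        f ^ (2 * j) * (3 * w ^ 2 - 2 * s * (j * H f * w + f * H w)) := by
      have h2 : g * H (H g) = f ^ j * s * (f * H (H g)) := by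
        linear_combination (H (H g)) * hg
      rw [mul_assoc 2, h2, hHHg, hHg]
      ring
    rw [hE, show 2 * (j + 1) - 1 = 2 * j + 1 by omega, pow_succ] at hd
    have hd2 := (mul_dvd_mul_iff_left (pow_ne_zero _ hp.ne_zero)).1 hd
    have hd3 : f ∣ ((j + 1) * (j + 3) : MvPowerSeries σ K) * (s * H f) ^ 2 := by
      rw [hw] at hd2
      have := dvd_sub hd2 (Dvd.intro
        (6 * (j + 1) * s * H f * H s + 3 * f * H s ^ 2
          - 2 * s * (j * H f * H s + H w)) rfl)
      convert this using 1
      rw [hw]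
      ring
    have hu : IsUnit ((j + 1) * (j + 3) : MvPowerSeries σ K) := by
      rw [MvPowerSeries.isUnit_iff_constantCoeff, isUnit_iff_ne_zero]
      simp only [map_mul, map_add, map_natCast, map_one, map_ofNat]
      have : (((j + 1) * (j + 3) : ℕ) : K) ≠ 0 := Nat.cast_ne_zero.2 (by positivity)
      push_cast at this
      exact this
    rw [hu.dvd_mul_left] at hd3
    exact (hp.dvd_or_dvd (hp.dvd_of_dvd_pow hd3)).resolve_left hs
  refine ⟨part1, ?_⟩
  have hprimes : ∀ p, Prime p → p ∣ g → p ∣ H p := by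
    intro p hp hpg
    have hfin : FiniteMultiplicity p g := FiniteMultiplicity.of_prime_left hp hg0
    obtain ⟨s, hs, hns⟩ := hfin.exists_eq_pow_mul_and_not_dvd
    refine part1 p s _ ?_ hp.irreducible hns hs
    by_contra hlt
    have h0 : multiplicity p g = 0 := by omega
    rw [h0, pow_zero, one_mul] at hs
    exact hns (hs ▸ hpg)
  have hind : ∀ a : MvPowerSeries σ K, (∀ p, Prime p → p ∣ a → p ∣ H p) → a ∣ H a := by
    intro a
    induction a using UniqueFactorizationMonoid.induction_on_prime with
    | h₁ => simp
    | h₂ x hx => intro _; exact hx.dvd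
    | h₃ a p ha hp ih =>
      intro h
      have h1 := ih fun q hq hqa => h q hq (hqa.mul_left p)
      have h2 := h p hp (dvd_mul_right p a)
      rw [Derivation.leibniz, smul_eq_mul, smul_eq_mul]
      refine dvd_add (mul_dvd_mul_left p h1) ?_
      rw [mul_comm p a]
      exact mul_dvd_mul_left a h2
  exact hind g hprimes
end

section
/- The contravariant metric tensor g^{ij} = −((1, 2u, 2u), (2u, 4v, 4v), (2u, 4v, 4w)) on ℝ³ (coordinates u, v, w) has determinant g = 16(w−v)(u²−v), and is positive definite exactly on the region R = {(u,v,w) : u² < v < w} after the overall sign; moreover the Riemannian curvature tensor of the associated metric vanishes identically on R. -/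
open Matrix

/-- `i`-th partial derivative of a function on ℝ³. -/
noncomputable def pd (i : Fin 3) (f : (Fin 3 → ℝ) → ℝ) (p : Fin 3 → ℝ) : ℝ :=
  fderiv ℝ f p (Pi.single i 1)

/-- The contravariant metric tensor (without the overall minus sign) in the
coordinates `(u, v, w) = (p 0, p 1, p 2)`. -/
noncomputable def gup (p : Fin 3 → ℝ) : Matrix (Fin 3) (Fin 3) ℝ :=
  !![1, 2 * p 0, 2 * p 0;
     2 * p 0, 4 * p 1, 4 * p 1;
     2 * p 0, 4 * p 1, 4 * p 2]

/-- The covariant metric: the inverse of the contravariant tensor. -/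
noncomputable def gdown (p : Fin 3 → ℝ) : Matrix (Fin 3) (Fin 3) ℝ := (gup p)⁻¹

/-- Christoffel symbols `Γ^i_{jk}` of the metric `gdown`. -/
noncomputable def Chr (i j k : Fin 3) (p : Fin 3 → ℝ) : ℝ :=
  (1 / 2) * ∑ l, gup p i l *
    (pd j (fun q => gdown q l k) p + pd k (fun q => gdown q l j) p
      - pd l (fun q => gdown q j k) p)

/-- Riemannian curvature tensor `R^i_{jkl}` of the metric `gdown`. -/
noncomputable def Riem (i j k l : Fin 3) (p : Fin 3 → ℝ) : ℝ :=
  pd k (fun q => Chr i l j q) p - pd l (fun q => Chr i k j q) p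
    + ∑ m, (Chr i k m p * Chr m l j p - Chr i l m p * Chr m k j p)

/-- Functions of the form `α + (b₀ + b₁ u + b₂ u²)/(v-u²) + c/(w-v)`. -/
noncomputable def EE (a b0 b1 b2 c : ℝ) (q : Fin 3 → ℝ) : ℝ :=
  a + (b0 + b1 * q 0 + b2 * (q 0) ^ 2) * (q 1 - (q 0) ^ 2)⁻¹ + c * (q 2 - q 1)⁻¹

lemma pd_EE (a b0 b1 b2 c : ℝ) (p : Fin 3 → ℝ) (h1 : (p 0) ^ 2 < p 1) (h2 : p 1 < p 2)
    (i : Fin 3) :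
    pd i (EE a b0 b1 b2 c) p =
      (b1 + 2 * b2 * p 0) * (![1, 0, 0] : Fin 3 → ℝ) i * (p 1 - (p 0) ^ 2)⁻¹
      - (b0 + b1 * p 0 + b2 * (p 0) ^ 2) * ((p 1 - (p 0) ^ 2)⁻¹) ^ 2
          * (![-2 * p 0, 1, 0] : Fin 3 → ℝ) i
      - c * ((p 2 - p 1)⁻¹) ^ 2 * (![0, -1, 1] : Fin 3 → ℝ) i := by
  have d1 : p 1 - (p 0) ^ 2 ≠ 0 := ne_of_gt (sub_pos.2 h1)
  have d2 : p 2 - p 1 ≠ 0 := ne_of_gt (sub_pos.2 h2)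
  have c0 : HasFDerivAt (fun q : Fin 3 → ℝ => q 0) (ContinuousLinearMap.proj (R := ℝ) 0) p :=
    hasFDerivAt_apply 0 p
  have c1 : HasFDerivAt (fun q : Fin 3 → ℝ => q 1) (ContinuousLinearMap.proj (R := ℝ) 1) p :=
    hasFDerivAt_apply 1 p
  have c2 : HasFDerivAt (fun q : Fin 3 → ℝ => q 2) (ContinuousLinearMap.proj (R := ℝ) 2) p :=
    hasFDerivAt_apply 2 p
  have e1 := (hasDerivAt_inv d1).comp_hasFDerivAt p (c1.sub (c0.pow 2))
  have e2 := (hasDerivAt_inv d2).comp_hasFDerivAt p (c2.sub c1)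
  have n := ((c0.const_mul b1).const_add b0).add ((c0.pow 2).const_mul b2)
  have H := ((n.mul e1).const_add a).add (e2.const_mul c)
  have H' : HasFDerivAt (EE a b0 b1 b2 c) _ p :=
    H.congr_of_eventuallyEq (Filter.Eventually.of_forall fun q => by
      simp [EE])
  unfold pd
  rw [H'.fderiv]
  fin_cases i <;> simp <;> field_simp <;> ring

/-- Explicit covariant metric. -/
noncomputable def GD (i j : Fin 3) : (Fin 3 → ℝ) → ℝ :=
  (!![EE 1 0 0 1 0, EE 0 0 (-1/2) 0 0, EE 0 0 0 0 0;
     EE 0 0 (-1/2) 0 0, EE 0 (1/4) 0 0 (1/4), EE 0 0 0 0 (-1/4);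
     EE 0 0 0 0 0, EE 0 0 0 0 (-1/4), EE 0 0 0 0 (1/4)] :
     Matrix (Fin 3) (Fin 3) ((Fin 3 → ℝ) → ℝ)) i j

/-- Explicit Christoffel symbols. -/
noncomputable def CC (i : Fin 3) : Matrix (Fin 3) (Fin 3) ((Fin 3 → ℝ) → ℝ) :=
  (![!![EE 0 0 0 0 0, EE 0 0 0 0 0, EE 0 0 0 0 0;
       EE 0 0 0 0 0, EE 0 0 0 0 0, EE 0 0 0 0 0;
       EE 0 0 0 0 0, EE 0 0 0 0 0, EE 0 0 0 0 0],
     !![EE (-2) 0 0 (-2) 0, EE 0 0 1 0 0, EE 0 0 0 0 0;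
       EE 0 0 1 0 0, EE 0 (-1/2) 0 0 0, EE 0 0 0 0 0;
       EE 0 0 0 0 0, EE 0 0 0 0 0, EE 0 0 0 0 0],
     !![EE (-2) 0 0 (-2) 0, EE 0 0 1 0 0, EE 0 0 0 0 0;
       EE 0 0 1 0 0, EE 0 (-1/2) 0 0 (-1/2), EE 0 0 0 0 (1/2);
       EE 0 0 0 0 0, EE 0 0 0 0 (1/2), EE 0 0 0 0 (-1/2)]] :
     Fin 3 → Matrix (Fin 3) (Fin 3) ((Fin 3 → ℝ) → ℝ)) i

lemma region_ev (p : Fin 3 → ℝ) (h1 : (p 0) ^ 2 < p 1) (h2 : p 1 < p 2) :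
    ∀ᶠ q in nhds p, (q 0) ^ 2 < q 1 ∧ q 1 < q 2 := by
  have o1 : IsOpen {q : Fin 3 → ℝ | (q 0) ^ 2 < q 1} :=
    isOpen_lt (by fun_prop) (by fun_prop)
  have o2 : IsOpen {q : Fin 3 → ℝ | q 1 < q 2} :=
    isOpen_lt (by fun_prop) (by fun_prop)
  exact Filter.Eventually.and (o1.mem_nhds h1) (o2.mem_nhds h2)

lemma pd_congr {f g : (Fin 3 → ℝ) → ℝ} (p : Fin 3 → ℝ)
    (h1 : (p 0) ^ 2 < p 1) (h2 : p 1 < p 2)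
    (h : ∀ q : Fin 3 → ℝ, (q 0) ^ 2 < q 1 → q 1 < q 2 → f q = g q) (i : Fin 3) :
    pd i f p = pd i g p := by
  unfold pd
  rw [Filter.EventuallyEq.fderiv_eq ((region_ev p h1 h2).mono fun q hq => h q hq.1 hq.2)]

lemma gdown_eq (p : Fin 3 → ℝ) (h1 : (p 0) ^ 2 < p 1) (h2 : p 1 < p 2) (i j : Fin 3) :
    gdown p i j = GD i j p := by
  have d1 : p 1 - (p 0) ^ 2 ≠ 0 := ne_of_gt (sub_pos.2 h1)
  have d2 : p 2 - p 1 ≠ 0 := ne_of_gt (sub_pos.2 h2)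
  have : gup p * (Matrix.of fun i j => GD i j p) = 1 := by
    ext i j
    fin_cases i <;> fin_cases j <;>
      simp [gup, GD, EE, Matrix.mul_apply, Fin.sum_univ_three] <;> field_simp <;> ring
  unfold gdown
  rw [Matrix.inv_eq_right_inv this]
  rfl

lemma Chr_eq (p : Fin 3 → ℝ) (h1 : (p 0) ^ 2 < p 1) (h2 : p 1 < p 2) (i j k : Fin 3) :
    Chr i j k p = CC i j k p := by
  have d1 : p 1 - (p 0) ^ 2 ≠ 0 := ne_of_gt (sub_pos.2 h1)
  have d2 : p 2 - p 1 ≠ 0 := ne_of_gt (sub_pos.2 h2)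
  have key : ∀ a b c : Fin 3, pd a (fun q => gdown q b c) p = pd a (GD b c) p := fun a b c =>
    pd_congr p h1 h2 (fun q hq1 hq2 => gdown_eq q hq1 hq2 b c) a
  unfold Chr
  simp only [key, Fin.sum_univ_three]
  fin_cases i <;> fin_cases j <;> fin_cases k <;>
    simp [gup, GD, CC, pd_EE _ _ _ _ _ p h1 h2] <;> (try simp only [EE]) <;> field_simp <;> ring

set_option maxHeartbeats 4000000 in
lemma Riem_eq (p : Fin 3 → ℝ) (h1 : (p 0) ^ 2 < p 1) (h2 : p 1 < p 2) (i j k l : Fin 3) :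
    Riem i j k l p = 0 := by
  have d1 : p 1 - (p 0) ^ 2 ≠ 0 := ne_of_gt (sub_pos.2 h1)
  have d2 : p 2 - p 1 ≠ 0 := ne_of_gt (sub_pos.2 h2)
  have key : ∀ a b c d : Fin 3, pd a (fun q => Chr b c d q) p = pd a (CC b c d) p :=
    fun a b c d => pd_congr p h1 h2 (fun q hq1 hq2 => Chr_eq q hq1 hq2 b c d) a
  unfold Riem
  simp only [key, Fin.sum_univ_three, Chr_eq p h1 h2]
  fin_cases i <;> fin_cases j <;> fin_cases k <;> fin_cases l <;>
    simp [CC, pd_EE _ _ _ _ _ p h1 h2] <;> (try simp only [EE]) <;> field_simp <;> ring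

lemma quad (p x : Fin 3 → ℝ) : star x ⬝ᵥ (gup p *ᵥ x) =
    (x 0 + 2 * p 0 * x 1 + 2 * p 0 * x 2) ^ 2 + 4 * (p 1 - (p 0) ^ 2) * (x 1 + x 2) ^ 2
      + 4 * (p 2 - p 1) * (x 2) ^ 2 := by
  simp [gup, dotProduct, Matrix.mulVec, Fin.sum_univ_three]
  ring

lemma posdef_iff (p : Fin 3 → ℝ) : (gup p).PosDef ↔ ((p 0) ^ 2 < p 1 ∧ p 1 < p 2) := by
  constructor
  · intro h
    have a := h.dotProduct_mulVec_pos (x := ![-2 * p 0, 1, 0]) (fun h => by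
      have := congrFun h 1
      simp at this)
    have b := h.dotProduct_mulVec_pos (x := ![0, -1, 1]) (fun h => by
      have := congrFun h 1
      simp at this)
    rw [quad] at a b
    simp at a b
    exact ⟨a, b⟩
  · rintro ⟨h1, h2⟩
    refine Matrix.PosDef.of_dotProduct_mulVec_pos ?_ ?_
    · ext i j
      fin_cases i <;> fin_cases j <;> simp [gup]
    · intro x hx
      rw [quad]
      have d1 := sub_pos.2 h1
      have d2 := sub_pos.2 h2
      by_cases z2 : x 2 = 0
      · by_cases z1 : x 1 = 0
        · have z0 : x 0 ≠ 0 := fun z0 => hx (by ext i; fin_cases i <;> simp [z0, z1, z2])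
          simp only [z1, z2]
          have : 0 < (x 0) ^ 2 := by positivity
          simpa using this
        · simp only [z2, add_zero]
          positivity
      · positivity

/-- The contravariant tensor `g^{ij} = −((1,2u,2u),(2u,4v,4v),(2u,4v,4w))` has
determinant `16(w−v)(u²−v)`; the matrix (after the overall sign) is positive
definite exactly on `R = {u² < v < w}`; and the Riemannian curvature tensor of
the associated metric vanishes identically on `R`. -/
theorem stmt_8 :
    (∀ p : Fin 3 → ℝ, (-(gup p)).det = 16 * (p 2 - p 1) * ((p 0) ^ 2 - p 1))
    ∧ (∀ p : Fin 3 → ℝ, (gup p).PosDef ↔ ((p 0) ^ 2 < p 1 ∧ p 1 < p 2))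
    ∧ (∀ p : Fin 3 → ℝ, (p 0) ^ 2 < p 1 → p 1 < p 2 →
        ∀ i j k l : Fin 3, Riem i j k l p = 0) := by
  refine ⟨fun p => ?_, posdef_iff, fun p h1 h2 i j k l => Riem_eq p h1 h2 i j k l⟩
  simp [gup, Matrix.det_fin_three]
  ring
end

section
/- Let M be a complete connected smooth surface in ℝ³ on which one principal curvature is identically zero and the other is a nonzero constant 1/R. Then M is a round cylinder of radius R (the set of points at distance R from a fixed straight line). -/
open scoped RealInnerProductSpace Topology ContDiff

lemma aux_fderiv_eq {E : Type*} [NormedAddCommGroup E] [InnerProductSpace ℝ E] [CompleteSpace E]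
    (f : E → ℝ) (p v : E) : fderiv ℝ f p v = ⟪gradient f p, v⟫ := by
  rw [← toDual_gradient]; simp

lemma aux_chart {E : Type*} [NormedAddCommGroup E] [InnerProductSpace ℝ E] [CompleteSpace E]
    (f : E → ℝ) (hf : ContDiff ℝ ∞ f) (p : E) (hp : f p = 0) (hg : gradient f p ≠ 0) :
    ∃ φ : E → E, ContDiffAt ℝ ∞ φ 0 ∧ φ 0 = p ∧ (∀ᶠ y in 𝓝 0, f (φ y) = 0) ∧
      (∀ v, ⟪gradient f p, v⟫ = 0 → fderiv ℝ φ 0 v = v) ∧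
      fderiv ℝ φ 0 (gradient f p) = 0 ∧
      (∀ U ∈ 𝓝 (0 : E), ∀ᶠ x in 𝓝 p, f x = 0 → x ∈ φ '' U) := by
  set g := gradient f p with hgdef
  have hgg : ⟪g, g⟫ ≠ 0 := by simpa using hg
  set m : E := (⟪g, g⟫)⁻¹ • g with hm
  have hgm : ⟪g, m⟫ = 1 := by rw [hm, inner_smul_right]; field_simp
  let Φ : E → E := fun x => x + (f x - ⟪g, x - p⟫) • m
  have hΦp : Φ p = p := by simp [Φ, hp]
  have hΦ : ContDiff ℝ ∞ Φ := by
    have : ContDiff ℝ ∞ (fun x => ⟪g, x - p⟫) := contDiff_const.inner ℝ (contDiff_id.sub contDiff_const)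
    exact contDiff_id.add ((hf.sub this).smul contDiff_const)
  have hgΦ : ∀ x, ⟪g, Φ x - p⟫ = f x := by
    intro x
    have : Φ x - p = (x - p) + (f x - ⟪g, x - p⟫) • m := by simp only [Φ]; abel
    rw [this, inner_add_right, inner_smul_right, hgm]; ring
  have hΦ' : HasFDerivAt Φ ((ContinuousLinearEquiv.refl ℝ E : E ≃L[ℝ] E) : E →L[ℝ] E) p := by
    have h1 : HasFDerivAt f (innerSL ℝ g) p := by
      have := (hf.differentiable (by simp) p).hasFDerivAt
      convert! this using 1
      ext v; rw [aux_fderiv_eq]; simp [hgdef]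
    have h2 : HasFDerivAt (fun x => ⟪g, x - p⟫) (innerSL ℝ g) p := by
      have := HasFDerivAt.comp (f := fun x : E => x - p) p ((innerSL ℝ g).hasFDerivAt (x := p - p))
        ((hasFDerivAt_id p).sub_const p)
      simpa [Function.comp_def] using! this
    have := (hasFDerivAt_id p).add ((h1.sub h2).smul_const m)
    convert! this using 1
    ext v; simp
  have hne : (∞ : WithTop ℕ∞) ≠ 0 := by simp
  have hS := (hΦ.contDiffAt (x := p)).hasStrictFDerivAt' hΦ' hne
  let Ψ := hS.localInverse Φ _ p
  have hΨ : ContDiffAt ℝ ∞ Ψ p := by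
    have := (hΦ.contDiffAt (x := p)).to_localInverse hΦ' hne
    rwa [hΦp] at this
  have hΨp : Ψ p = p := by
    have := hS.localInverse_apply_image; rwa [hΦp] at this
  have hΨ' : HasFDerivAt Ψ (ContinuousLinearMap.id ℝ E) p := by
    have := hS.to_localInverse.hasFDerivAt; rw [hΦp] at this; simpa using! this
  have hR : ∀ᶠ y in 𝓝 p, Φ (Ψ y) = y := by
    have := hS.eventually_right_inverse; rwa [hΦp] at this
  have hL : ∀ᶠ x in 𝓝 p, Ψ (Φ x) = x := hS.eventually_left_inverse
  let κ : E → E := fun y => p + (y - ⟪g, y⟫ • m)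
  have hκ : ContDiff ℝ ∞ κ :=
    contDiff_const.add (contDiff_id.sub ((contDiff_const.inner ℝ contDiff_id).smul contDiff_const))
  have hκ0 : κ 0 = p := by simp [κ]
  have hκ' : HasFDerivAt κ (ContinuousLinearMap.id ℝ E - (innerSL ℝ g).smulRight m) 0 := by
    exact ((hasFDerivAt_id 0).sub (((innerSL ℝ g).hasFDerivAt).smul_const m)).const_add p
  have hφ' : HasFDerivAt (Ψ ∘ κ) (ContinuousLinearMap.id ℝ E - (innerSL ℝ g).smulRight m) 0 := by
    have : HasFDerivAt Ψ (ContinuousLinearMap.id ℝ E) (κ 0) := by rw [hκ0]; exact hΨ'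
    simpa using this.comp 0 hκ'
  refine ⟨Ψ ∘ κ, ?_, ?_, ?_, ?_, ?_, ?_⟩
  · exact ContDiffAt.comp 0 (by rw [hκ0]; exact hΨ) hκ.contDiffAt
  · simp [hκ0, hΨp]
  · have : Filter.Tendsto κ (𝓝 0) (𝓝 p) := by
      have := hκ.continuous.tendsto 0; rwa [hκ0] at this
    filter_upwards [this.eventually hR] with y hy
    rw [← hgΦ, Function.comp_apply, hy]
    simp [κ, inner_sub_right, inner_smul_right, hgm]
  · intro v hv
    rw [hφ'.fderiv]; simp [hv]
  · rw [hφ'.fderiv]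
    simp only [sub_apply, ContinuousLinearMap.smulRight_apply, innerSL_apply_apply, hm, smul_smul]
    rw [mul_inv_cancel₀ hgg]; simp
  · intro U hU
    have : Filter.Tendsto (fun x => Φ x - p) (𝓝 p) (𝓝 0) := by
      have := (hΦ.continuous.sub (continuous_const (y := p))).tendsto p
      simpa [hΦp] using! this
    filter_upwards [this.eventually hU, hL] with x hx1 hx2 hx3
    refine ⟨Φ x - p, hx1, ?_⟩
    have : κ (Φ x - p) = Φ x := by simp only [κ]; rw [hgΦ, hx3]; simp
    rw [Function.comp_apply, this, hx2]

/-- derivative of the chart is tangent -/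
lemma aux_tangent {E : Type*} [NormedAddCommGroup E] [InnerProductSpace ℝ E] [CompleteSpace E]
    (f : E → ℝ) (hf : ContDiff ℝ ∞ f) (φ : E → E) (hφ : ContDiffAt ℝ ∞ φ 0)
    (h : ∀ᶠ y in 𝓝 0, f (φ y) = 0) :
    ∀ᶠ y in 𝓝 0, f (φ y) = 0 ∧ DifferentiableAt ℝ φ y ∧
      ∀ w, ⟪gradient f (φ y), fderiv ℝ φ y w⟫ = 0 := by
  have h1 : ∀ᶠ y in 𝓝 0, ContDiffAt ℝ 1 φ y :=
    (hφ.of_le (by exact_mod_cast le_top)).eventually (by simp)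
  filter_upwards [h, h.eventually_nhds, h1] with y hy0 hy hy1
  have hd := hy1.differentiableAt (by simp)
  refine ⟨hy0, hd, fun w => ?_⟩
  rw [← aux_fderiv_eq]
  have : fderiv ℝ (f ∘ φ) y = 0 := by
    have : f ∘ φ =ᶠ[𝓝 y] fun _ => (0:ℝ) := hy
    rw [this.fderiv_eq]; simp
  rw [fderiv_comp y (hf.differentiable (by simp) _) hd] at this
  simpa using DFunLike.congr_fun this w

lemma aux_const {E F : Type*} [NormedAddCommGroup E] [InnerProductSpace ℝ E] [CompleteSpace E]
    [NormedAddCommGroup F] [NormedSpace ℝ F]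
    (f : E → ℝ) (hf : ContDiff ℝ ∞ f) (M : Set E) (hM : M = f ⁻¹' {0}) (hconn : IsConnected M)
    (hreg : ∀ p ∈ M, gradient f p ≠ 0) (g : E → F)
    (hg : ∀ p ∈ M, DifferentiableAt ℝ g p)
    (hg' : ∀ p ∈ M, ∀ v, ⟪gradient f p, v⟫ = 0 → fderiv ℝ g p v = 0) :
    ∀ p ∈ M, ∀ q ∈ M, g p = g q := by
  have key : IsLocallyConstant (fun x : M => g x) := by
    rw [IsLocallyConstant.iff_eventually_eq]
    rintro ⟨p, hpM⟩
    have hp0 : f p = 0 := by rw [hM] at hpM; exact hpM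
    obtain ⟨φ, h1, h2, h3, -, -, h6⟩ := aux_chart f hf p hp0 (hreg p hpM)
    obtain ⟨ε, hε, hb⟩ := Metric.eventually_nhds_iff_ball.1 (aux_tangent f hf φ h1 h3)
    have hmem : ∀ y ∈ Metric.ball (0:E) ε, φ y ∈ M := fun y hy => by rw [hM]; exact (hb y hy).1
    have hc : ∀ y ∈ Metric.ball (0:E) ε, g (φ y) = g p := by
      intro y hy
      have hD : ∀ y ∈ Metric.ball (0:E) ε, DifferentiableAt ℝ (g ∘ φ) y := fun y hy =>
        (hg _ (hmem y hy)).comp y (hb y hy).2.1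
      have := (Metric.isOpen_ball (x := (0:E)) (ε := ε)).is_const_of_fderiv_eq_zero (𝕜 := ℝ)
        (f := g ∘ φ) (convex_ball _ _).isPreconnected
        (fun y hy => (hD y hy).differentiableWithinAt)
        (fun y hy => by
          rw [fderiv_comp y (hg _ (hmem y hy)) (hb y hy).2.1]
          ext w
          simpa using hg' _ (hmem y hy) _ ((hb y hy).2.2 w)) hy (Metric.mem_ball_self hε)
      simpa [h2] using this
    have := h6 _ (Metric.ball_mem_nhds 0 hε)
    have := continuous_subtype_val.continuousAt (x := (⟨p, hpM⟩ : M)) |>.eventually this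
    filter_upwards [this] with x hx
    obtain ⟨y, hy, hyx⟩ := hx (by have := hM.subset x.2; exact this)
    rw [← hyx]; exact hc y hy
  have : PreconnectedSpace M := isPreconnected_iff_preconnectedSpace.1 hconn.isPreconnected
  intro p hp q hq
  exact key.apply_eq_of_preconnectedSpace ⟨p, hp⟩ ⟨q, hq⟩

/-- projection orthogonal to `d` -/
noncomputable def auxQ {E : Type*} [NormedAddCommGroup E] [InnerProductSpace ℝ E] (d : E) : E →L[ℝ] E :=
  ContinuousLinearMap.id ℝ E - (innerSL ℝ d).smulRight d

lemma auxQ_apply {E : Type*} [NormedAddCommGroup E] [InnerProductSpace ℝ E] (d x : E) :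
    auxQ d x = x - ⟪d, x⟫ • d := by simp [auxQ]

lemma auxQ_self {E : Type*} [NormedAddCommGroup E] [InnerProductSpace ℝ E] (d : E) (hd : ‖d‖ = 1) :
    auxQ d d = 0 := by simp [auxQ_apply, hd]

lemma auxQ_Q {E : Type*} [NormedAddCommGroup E] [InnerProductSpace ℝ E] (d : E) (hd : ‖d‖ = 1) (x : E) :
    auxQ d (auxQ d x) = auxQ d x := by
  conv_lhs => rw [auxQ_apply d x]
  rw [map_sub, map_smul, auxQ_self d hd]; simp

lemma auxQ_norm_le {E : Type*} [NormedAddCommGroup E] [InnerProductSpace ℝ E] (d : E) (hd : ‖d‖ = 1) (x : E) :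
    ‖auxQ d x‖ ≤ ‖x‖ := by
  have : ‖auxQ d x‖ ^ 2 = ‖x‖ ^ 2 - ⟪d, x⟫ ^ 2 := by
    rw [auxQ_apply, norm_sub_sq_real, inner_smul_right, norm_smul, hd, real_inner_comm]
    simp; ring
  apply le_of_sq_le_sq _ (norm_nonneg _)
  nlinarith [sq_nonneg ⟪d, x⟫]

lemma aux_infDist {E : Type*} [NormedAddCommGroup E] [InnerProductSpace ℝ E] (a d : E) (hd : ‖d‖ = 1)
    (p : E) : Metric.infDist p {x | ∃ t : ℝ, x = a + t • d} = ‖auxQ d (p - a)‖ := by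
  apply le_antisymm
  · have : Metric.infDist p {x | ∃ t : ℝ, x = a + t • d} ≤ dist p (a + ⟪d, p - a⟫ • d) :=
      Metric.infDist_le_dist_of_mem ⟨_, rfl⟩
    rwa [dist_eq_norm, ← sub_sub, ← auxQ_apply] at this
  · have hn : ({x | ∃ t : ℝ, x = a + t • d} : Set E).Nonempty := ⟨a, 0, by simp⟩
    rw [Metric.le_infDist hn]
    rintro y ⟨t, rfl⟩
    have h : auxQ d (p - a) = auxQ d (p - (a + t • d)) := by
      rw [← sub_sub, map_sub _ (p - a), map_smul, auxQ_self d hd]; simp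
    rw [h, dist_eq_norm]
    exact auxQ_norm_le d hd _

lemma aux_cyl_conn (a d : EuclideanSpace ℝ (Fin 3)) (hd : ‖d‖ = 1) (R : ℝ) (hR : 0 < R) :
    IsPreconnected {p | ‖auxQ d (p - a)‖ = R} := by
  have hne : d ≠ 0 := by rintro rfl; simp at hd
  have h1 : IsConnected ((Submodule.span ℝ {d} : Set (EuclideanSpace ℝ (Fin 3)))ᶜ) := by
    apply isConnected_compl_of_one_lt_codim
    have h := Submodule.finrank_quotient_add_finrank (Submodule.span ℝ {d})
    rw [finrank_span_singleton hne, finrank_euclideanSpace_fin] at h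
    rw [← Module.finrank_eq_rank]
    have : Module.finrank ℝ (EuclideanSpace ℝ (Fin 3) ⧸ Submodule.span ℝ {d}) = 2 := by omega
    rw [this]; norm_num
  have hQ : ∀ x ∈ ((Submodule.span ℝ {d} : Set (EuclideanSpace ℝ (Fin 3)))ᶜ), ‖auxQ d x‖ ≠ 0 := by
    intro x hx h
    apply hx
    rw [norm_eq_zero, auxQ_apply, sub_eq_zero] at h
    rw [h]; exact Submodule.smul_mem _ _ (Submodule.mem_span_singleton_self d)
  have h2 := h1.isPreconnected.image (fun x => a + ⟪d, x⟫ • d + (R / ‖auxQ d x‖) • auxQ d x) (by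
    have hc : Continuous (auxQ d) := (auxQ d).continuous
    refine ContinuousOn.add (by fun_prop) (ContinuousOn.fun_smul ?_ hc.continuousOn)
    exact continuousOn_const.div (by fun_prop) hQ)
  convert h2 using 1
  ext p
  simp only [Set.mem_ofPred_eq, Set.mem_image]
  constructor
  · intro hp
    refine ⟨p - a, ?_, ?_⟩
    · intro h
      obtain ⟨t, ht⟩ := Submodule.mem_span_singleton.1 h
      rw [← ht, map_smul, auxQ_self d hd] at hp
      simp at hp; exact hR.ne hp
    · rw [hp, div_self hR.ne', auxQ_apply]; simp
  · rintro ⟨x, hx, rfl⟩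
    have := hQ x hx
    have e : a + ⟪d, x⟫ • d + (R / ‖auxQ d x‖) • auxQ d x - a
      = ⟪d, x⟫ • d + (R / ‖auxQ d x‖) • auxQ d x := by abel
    rw [e, map_add, map_smul, map_smul, auxQ_self d hd, auxQ_Q d hd]
    rw [smul_zero, zero_add, norm_smul, Real.norm_of_nonneg (by positivity)]
    field_simp

lemma aux_final (f : EuclideanSpace ℝ (Fin 3) → ℝ) (hf : ContDiff ℝ ∞ f)
    (M : Set (EuclideanSpace ℝ (Fin 3))) (hM : M = f ⁻¹' {0})
    (hne : M.Nonempty) (R : ℝ) (hR : 0 < R) (a d : EuclideanSpace ℝ (Fin 3)) (hd : ‖d‖ = 1)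
    (hQ : ∀ p ∈ M, ‖auxQ d (p - a)‖ = R)
    (hQ' : ∀ p ∈ M, 0 < fderiv ℝ f p (auxQ d (p - a))) :
    M = {p | ‖auxQ d (p - a)‖ = R} := by
  apply Set.Subset.antisymm hQ
  set C := {p | ‖auxQ d (p - a)‖ = R} with hC
  have hloc : ∀ p ∈ M, ∀ᶠ q in 𝓝 p, q ∈ C → q ∈ M := by
    intro p hp
    have hp0 : f p = 0 := hM.subset hp
    have hcont : Continuous fun z : EuclideanSpace ℝ (Fin 3) × ℝ => f (z.1 + z.2 • auxQ d (z.1 - a)) := by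
      have := hf.continuous
      have := (auxQ d).continuous
      fun_prop
    have hder : HasDerivAt (fun r : ℝ => f (p + r • auxQ d (p - a))) (fderiv ℝ f p (auxQ d (p - a))) 0 := by
      have h1 : HasDerivAt (fun r : ℝ => p + r • auxQ d (p - a)) (auxQ d (p - a)) 0 := by
        simpa using ((hasDerivAt_id (0:ℝ)).smul_const (auxQ d (p - a))).const_add p
      have h2 := (hf.differentiable (by simp) (p + (0:ℝ) • auxQ d (p - a))).hasFDerivAt
      have := h2.comp_hasDerivAt (0:ℝ) h1
      simpa [Function.comp_def] using! this
    rw [hasDerivAt_iff_tendsto_slope] at hder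
    have hev := hder.eventually (lt_mem_nhds (hQ' p hp))
    rw [eventually_nhdsWithin_iff] at hev
    obtain ⟨ε, hε, hb⟩ := Metric.eventually_nhds_iff_ball.1 hev
    set r := min (ε / 2) (1 / 2) with hr
    have hr0 : 0 < r := by positivity
    have hr1 : r < ε := (min_le_left _ _).trans_lt (by linarith)
    have hr2 : r < 1 := (min_le_right _ _).trans_lt (by norm_num)
    have hpos : 0 < f (p + r • auxQ d (p - a)) := by
      have := hb r (by simp [abs_of_pos hr0, hr1]) hr0.ne'
      simp only [slope_def_field, hp0, zero_smul, add_zero, sub_zero] at this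
      exact (div_pos_iff_of_pos_right hr0).1 this
    have hneg : f (p + (-r) • auxQ d (p - a)) < 0 := by
      have := hb (-r) (by simp [abs_of_pos hr0, hr1]) (by simpa using hr0.ne')
      simp only [slope_def_field, hp0, zero_smul, add_zero, sub_zero] at this
      by_contra hcon
      push Not at hcon
      exact absurd (div_nonpos_of_nonneg_of_nonpos hcon (by linarith : -r ≤ 0)) (not_le.2 this)
    have e1 : ∀ᶠ q in 𝓝 p, 0 < f (q + r • auxQ d (q - a)) :=
      ((hcont.comp (continuous_id.prodMk continuous_const)).tendsto p).eventually (lt_mem_nhds hpos)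
    have e2 : ∀ᶠ q in 𝓝 p, f (q + (-r) • auxQ d (q - a)) < 0 :=
      ((hcont.comp (continuous_id.prodMk continuous_const)).tendsto p).eventually (gt_mem_nhds hneg)
    filter_upwards [e1, e2] with q h1 h2 hqC
    have hcq : Continuous fun s : ℝ => f (q + s • auxQ d (q - a)) :=
      hcont.comp (continuous_const.prodMk continuous_id)
    obtain ⟨s, ⟨hs1, hs2⟩, hs⟩ := intermediate_value_Icc (by linarith : -r ≤ r) hcq.continuousOn
      (Set.mem_Icc.2 ⟨h2.le, h1.le⟩)
    have hsM : q + s • auxQ d (q - a) ∈ M := by rw [hM]; exact hs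
    have := hQ _ hsM
    have e : q + s • auxQ d (q - a) - a = (q - a) + s • auxQ d (q - a) := by abel
    have hqC' : ‖auxQ d (q - a)‖ = R := hqC
    have e' : auxQ d (q - a) + s • auxQ d (q - a) = (1 + s) • auxQ d (q - a) := by
      rw [add_smul, one_smul]
    rw [e, map_add, map_smul, auxQ_Q d hd, e', norm_smul, hqC', Real.norm_of_nonneg (by linarith)] at this
    have hs0 : s = 0 := by
      have : s * R = 0 := by linarith
      rcases mul_eq_zero.1 this with h | h
      · exact h
      · exact absurd h hR.ne'
    simpa [hs0] using hsM
  have hcl : IsClosed M := by rw [hM]; exact isClosed_singleton.preimage hf.continuous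
  let U : Set (EuclideanSpace ℝ (Fin 3)) := interior {q | q ∈ C → q ∈ M}
  have hCconn : IsPreconnected C := aux_cyl_conn a d hd R hR
  by_contra hcon
  obtain ⟨x, hxC, hxM⟩ := Set.not_subset.1 hcon
  obtain ⟨p, hp⟩ := hne
  obtain ⟨z, hzC, hzU, hzM⟩ := hCconn U Mᶜ isOpen_interior hcl.isOpen_compl
    (fun y hy => by
      by_cases hyM : y ∈ M
      · exact Or.inl (mem_interior_iff_mem_nhds.2 (hloc y hyM))
      · exact Or.inr hyM)
    ⟨p, hQ p hp, mem_interior_iff_mem_nhds.2 (hloc p hp)⟩ ⟨x, hxC, hxM⟩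
  exact hzM (interior_subset hzU hzC)


lemma aux_frame (e₁ e₂ n : (EuclideanSpace ℝ (Fin 3))) (h1 : ‖e₁‖ = 1) (h2 : ‖e₂‖ = 1) (h3 : ‖n‖ = 1)
    (h12 : ⟪e₁, e₂⟫ = 0) (h13 : ⟪e₁, n⟫ = 0) (h23 : ⟪e₂, n⟫ = 0) (x : (EuclideanSpace ℝ (Fin 3))) :
    x = ⟪e₁, x⟫ • e₁ + ⟪e₂, x⟫ • e₂ + ⟪n, x⟫ • n := by
  have ho : Orthonormal ℝ ![e₁, e₂, n] := by
    rw [orthonormal_iff_ite]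
    intro i j
    fin_cases i <;> fin_cases j <;> simp [h1, h2, h3, h12, h13, h23, real_inner_comm e₁ e₂, real_inner_comm e₁ n, real_inner_comm e₂ n]
  let b := basisOfOrthonormalOfCardEqFinrank ho (by simp)
  have hb : ⇑b = ![e₁, e₂, n] := by simp [b]
  let ob := b.toOrthonormalBasis (by rw [hb]; exact ho)
  have hob : ∀ i, ob i = ![e₁, e₂, n] i := by intro i; simp [ob, hb]
  have := ob.sum_repr' x
  rw [Fin.sum_univ_three, hob, hob, hob] at this
  exact this.symm

/-- The pure linear algebra of the Codazzi argument. -/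
lemma aux_alg (e₁ e₂ n : (EuclideanSpace ℝ (Fin 3))) (h1 : ‖e₁‖ = 1) (h2 : ‖e₂‖ = 1) (h3 : ‖n‖ = 1)
    (h12 : ⟪e₁, e₂⟫ = 0) (h13 : ⟪e₁, n⟫ = 0) (h23 : ⟪e₂, n⟫ = 0)
    (G B C : (EuclideanSpace ℝ (Fin 3)) →L[ℝ] (EuclideanSpace ℝ (Fin 3))) (hG : ∀ x, G x = ⟪e₁, x⟫ • e₁)
    (hB : ∀ x, B (G x) + G (B x) = B x) (hC : ∀ x, C (G x) + G (C x) = C x)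
    (hBs : ∀ x y, ⟪B x, y⟫ = ⟪x, B y⟫) (hCs : ∀ x y, ⟪C x, y⟫ = ⟪x, C y⟫)
    (hBn : B n = 0) (hCn : C n = 0) (hBC : B e₂ = C e₁) : B = 0 ∧ C = 0 := by
  have h11 : ⟪e₁, e₁⟫ = 1 := by simp [h1]
  have h22 : ⟪e₂, e₂⟫ = 1 := by simp [h2]
  have gen : ∀ B : (EuclideanSpace ℝ (Fin 3)) →L[ℝ] (EuclideanSpace ℝ (Fin 3)), (∀ x, B (G x) + G (B x) = B x) →
      (∀ x y, ⟪B x, y⟫ = ⟪x, B y⟫) → B n = 0 →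
      ∃ b : ℝ, B e₂ = b • e₁ ∧ B e₁ = b • e₂ := by
    intro B hB hBs hBn
    have k1 : ⟪e₁, B e₁⟫ = 0 := by
      have := hB e₁
      rw [hG e₁, h11, one_smul, hG] at this
      have h0 : ⟪e₁, B e₁⟫ • e₁ = 0 := by simpa using this
      have := congrArg (fun z => ⟪e₁, z⟫) h0
      simpa [inner_smul_right, h11, h1] using this
    have k2 : B e₂ = ⟪e₁, B e₂⟫ • e₁ := by
      have := hB e₂
      rw [hG e₂, h12, zero_smul, map_zero, zero_add, hG] at this
      exact this.symm
    refine ⟨⟪e₁, B e₂⟫, k2, ?_⟩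
    have k3 : ⟪n, B e₁⟫ = 0 := by rw [← hBs, hBn]; simp
    have k4 : ⟪e₂, B e₁⟫ = ⟪e₁, B e₂⟫ := by rw [← hBs, real_inner_comm]
    have := aux_frame e₁ e₂ n h1 h2 h3 h12 h13 h23 (B e₁)
    rw [k1, k3, k4] at this
    simpa using this
  obtain ⟨b, hb2, hb1⟩ := gen B hB hBs hBn
  obtain ⟨c, hc2, hc1⟩ := gen C hC hCs hCn
  have hbc : b • e₁ = c • e₂ := by rw [← hb2, ← hc1, hBC]
  have hb : b = 0 := by
    have := congrArg (fun z => ⟪e₁, z⟫) hbc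
    simpa [inner_smul_right, h11, h12, h1] using this
  have hc : c = 0 := by
    have := congrArg (fun z => ⟪e₂, z⟫) hbc
    have h21 : ⟪e₂, e₁⟫ = 0 := by rw [real_inner_comm]; exact h12
    simpa [inner_smul_right, h22, h21, h2] using this.symm
  constructor
  · ext1 x
    rw [aux_frame e₁ e₂ n h1 h2 h3 h12 h13 h23 x]
    simp [hb1, hb2, hb, hBn]
  · ext1 x
    rw [aux_frame e₁ e₂ n h1 h2 h3 h12 h13 h23 x]
    simp [hc1, hc2, hc, hCn]

/-- `ν` is smooth where the gradient does not vanish. -/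
lemma aux_nu_smooth (f : (EuclideanSpace ℝ (Fin 3)) → ℝ) (hf : ContDiff ℝ ∞ f) (ν : (EuclideanSpace ℝ (Fin 3)) → (EuclideanSpace ℝ (Fin 3)))
    (hν : ∀ p, ν p = ‖gradient f p‖⁻¹ • gradient f p) (p : (EuclideanSpace ℝ (Fin 3))) (hp : gradient f p ≠ 0) :
    ContDiffAt ℝ ∞ ν p := by
  have hg : ContDiff ℝ ∞ (gradient f) := by
    have h1 : ContDiff ℝ ∞ (fderiv ℝ f) := hf.fderiv_right (by simp)
    exact (InnerProductSpace.toDual ℝ (EuclideanSpace ℝ (Fin 3))).symm.toContinuousLinearEquiv.contDiff.comp h1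
  have : ν = fun p => ‖gradient f p‖⁻¹ • gradient f p := funext hν
  rw [this]
  exact ((hg.contDiffAt.norm ℝ hp).inv (by simpa using hp)).smul hg.contDiffAt

/-- The operator field which on `M` is the projection to the `0`-direction. -/
noncomputable def auxA {E : Type*} [NormedAddCommGroup E] [InnerProductSpace ℝ E]
    (R : ℝ) (ν : E → E) (p : E) : E →L[ℝ] E :=
  (ContinuousLinearMap.id ℝ E - R • fderiv ℝ ν p).comp (auxQ (ν p))

lemma auxA_smooth {E : Type*} [NormedAddCommGroup E] [InnerProductSpace ℝ E]
    (R : ℝ) (ν : E → E) (p : E) (h : ContDiffAt ℝ ∞ ν p) :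
    ContDiffAt ℝ ∞ (auxA R ν) p := by
  have h1 : ContDiffAt ℝ ∞ (fderiv ℝ ν) p := h.fderiv_right (by simp)
  have h3 : ContDiffAt ℝ ∞ (fun q => innerSL ℝ (ν q)) p :=
    ContDiffAt.comp (g := fun x : E => innerSL ℝ x) p (innerSL ℝ (E := E)).contDiff.contDiffAt h
  have h4 : ContDiffAt ℝ ∞ (fun q => (innerSL ℝ (ν q)).smulRight (ν q)) p := h3.smulRight h
  have h2 : ContDiffAt ℝ ∞ (fun q => auxQ (ν q)) p := by
    unfold auxQ
    exact contDiffAt_const.sub h4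
  have h5 : ContDiffAt ℝ ∞ (fun q => ContinuousLinearMap.id ℝ E - R • fderiv ℝ ν q) p :=
    contDiffAt_const.sub (h1.const_smul R)
  exact h5.clm_comp h2

lemma auxA_apply (R : ℝ) (hR : 0 < R) (ν : (EuclideanSpace ℝ (Fin 3)) → (EuclideanSpace ℝ (Fin 3))) (p e₁ e₂ : (EuclideanSpace ℝ (Fin 3))) (hn : ‖ν p‖ = 1)
    (h1 : ‖e₁‖ = 1) (h2 : ‖e₂‖ = 1)
    (h12 : ⟪e₁, e₂⟫ = 0) (h13 : ⟪e₁, ν p⟫ = 0) (h23 : ⟪e₂, ν p⟫ = 0)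
    (hd1 : fderiv ℝ ν p e₁ = 0) (hd2 : fderiv ℝ ν p e₂ = R⁻¹ • e₂) (x : (EuclideanSpace ℝ (Fin 3))) :
    auxA R ν p x = ⟪e₁, x⟫ • e₁ := by
  have a1 : auxQ (ν p) e₁ = e₁ := by rw [auxQ_apply, real_inner_comm, h13]; simp
  have a2 : auxQ (ν p) e₂ = e₂ := by rw [auxQ_apply, real_inner_comm, h23]; simp
  have a3 := auxQ_self _ hn
  have b1 : auxA R ν p e₁ = e₁ := by simp [auxA, a1, hd1]
  have b2 : auxA R ν p e₂ = 0 := by simp [auxA, a2, hd2, smul_smul, hR.ne']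
  have b3 : auxA R ν p (ν p) = 0 := by simp [auxA, a3]
  conv_lhs => rw [aux_frame e₁ e₂ (ν p) h1 h2 hn h12 h13 h23 x]
  simp [b1, b2, b3]

lemma aux_codazzi (f : (EuclideanSpace ℝ (Fin 3)) → ℝ) (hf : ContDiff ℝ ∞ f)
    (M : Set (EuclideanSpace ℝ (Fin 3))) (hM : M = f ⁻¹' {0})
    (hreg : ∀ p ∈ M, gradient f p ≠ 0)
    (R : ℝ) (hR : 0 < R) (ν : (EuclideanSpace ℝ (Fin 3)) → (EuclideanSpace ℝ (Fin 3)))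
    (hν : ∀ p, ν p = ‖gradient f p‖⁻¹ • gradient f p)
    (hcurv : ∀ p ∈ M, ∃ e₁ e₂ : (EuclideanSpace ℝ (Fin 3)),
      ‖e₁‖ = 1 ∧ ‖e₂‖ = 1 ∧ ⟪e₁, e₂⟫ = 0 ∧ ⟪e₁, ν p⟫ = 0 ∧ ⟪e₂, ν p⟫ = 0 ∧
      fderiv ℝ ν p e₁ = 0 ∧ fderiv ℝ ν p e₂ = R⁻¹ • e₂) (p : (EuclideanSpace ℝ (Fin 3))) (hp : p ∈ M) :
    ∀ v, ⟪gradient f p, v⟫ = 0 → fderiv ℝ (auxA R ν) p v = 0 := by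
  have hn1 : ∀ q ∈ M, ‖ν q‖ = 1 := by
    intro q hq
    rw [hν, norm_smul, norm_inv, norm_norm, inv_mul_cancel₀ (by simpa using hreg q hq)]
  have hperp : ∀ q ∈ M, ∀ v, ⟪gradient f q, v⟫ = 0 ↔ ⟪ν q, v⟫ = 0 := by
    intro q hq v
    rw [hν, real_inner_smul_left]; simp [hreg q hq]
  have hνs : ∀ q ∈ M, ContDiffAt ℝ ∞ ν q := fun q hq => aux_nu_smooth f hf ν hν q (hreg q hq)
  have hAs : ∀ q ∈ M, ContDiffAt ℝ ∞ (auxA R ν) q := fun q hq => auxA_smooth R ν q (hνs q hq)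
  obtain ⟨φ, hφ, hφ0, hφM, hφt, hφn, -⟩ := aux_chart f hf p (hM.subset hp) (hreg p hp)
  have hT := aux_tangent f hf φ hφ hφM
  have hinM : ∀ y, f (φ y) = 0 → φ y ∈ M := fun y hy => by rw [hM]; exact hy
  -- the pulled back field
  let G : (EuclideanSpace ℝ (Fin 3)) → (EuclideanSpace ℝ (Fin 3)) →L[ℝ] (EuclideanSpace ℝ (Fin 3)) := fun y => auxA R ν (φ y)
  let N : (EuclideanSpace ℝ (Fin 3)) → (EuclideanSpace ℝ (Fin 3)) := fun y => ν (φ y)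
  have hGs : ContDiffAt ℝ ∞ G 0 := ContDiffAt.comp (g := auxA R ν) 0 (by rw [hφ0]; exact hAs p hp) hφ
  have hNs : ContDiffAt ℝ ∞ N 0 := ContDiffAt.comp (g := ν) 0 (by rw [hφ0]; exact hνs p hp) hφ
  have hG' : HasFDerivAt G (fderiv ℝ G 0) 0 := (hGs.differentiableAt (by simp)).hasFDerivAt
  have hN' : HasFDerivAt N (fderiv ℝ N 0) 0 := (hNs.differentiableAt (by simp)).hasFDerivAt
  have hφd := hφ.differentiableAt (by simp)
  have hGchain : ∀ u, fderiv ℝ G 0 u = fderiv ℝ (auxA R ν) p (fderiv ℝ φ 0 u) := by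
    intro u
    have : fderiv ℝ G 0 = (fderiv ℝ (auxA R ν) (φ 0)).comp (fderiv ℝ φ 0) :=
      fderiv_comp (g := auxA R ν) (0 : (EuclideanSpace ℝ (Fin 3))) (by rw [hφ0]; exact (hAs p hp).differentiableAt (by simp)) hφd
    rw [this, hφ0]; rfl
  have hNchain : ∀ u, fderiv ℝ N 0 u = fderiv ℝ ν p (fderiv ℝ φ 0 u) := by
    intro u
    have : fderiv ℝ N 0 = (fderiv ℝ ν (φ 0)).comp (fderiv ℝ φ 0) :=
      fderiv_comp (0 : (EuclideanSpace ℝ (Fin 3))) (by rw [hφ0]; exact (hνs p hp).differentiableAt (by simp)) hφd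
    rw [this, hφ0]; rfl
  -- pointwise identities for `G`
  have hGproj : ∀ᶠ y in 𝓝 0, (G y).comp (G y) = G y := by
    filter_upwards [hφM] with y hy
    obtain ⟨e₁, e₂, h1, h2, h12, h13, h23, hd1, hd2⟩ := hcurv _ (hinM y hy)
    have := auxA_apply R hR ν _ e₁ e₂ (hn1 _ (hinM y hy)) h1 h2 h12 h13 h23 hd1 hd2
    ext1 x
    simp only [G, ContinuousLinearMap.comp_apply, this, inner_smul_right]
    simp [h1]
  have hGsymm : ∀ x z, ∀ᶠ y in 𝓝 0, ⟪G y x, z⟫ = ⟪x, G y z⟫ := by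
    intro x z
    filter_upwards [hφM] with y hy
    obtain ⟨e₁, e₂, h1, h2, h12, h13, h23, hd1, hd2⟩ := hcurv _ (hinM y hy)
    have := auxA_apply R hR ν _ e₁ e₂ (hn1 _ (hinM y hy)) h1 h2 h12 h13 h23 hd1 hd2
    simp only [G, this, inner_smul_right, real_inner_smul_left]
    rw [real_inner_comm x e₁]; ring
  have hGN : ∀ᶠ y in 𝓝 0, G y (N y) = 0 := by
    filter_upwards [hφM] with y hy
    obtain ⟨e₁, e₂, h1, h2, h12, h13, h23, hd1, hd2⟩ := hcurv _ (hinM y hy)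
    have := auxA_apply R hR ν _ e₁ e₂ (hn1 _ (hinM y hy)) h1 h2 h12 h13 h23 hd1 hd2
    simp only [G, N, this, h13, zero_smul]
  -- differentiated identities
  have dproj : ∀ u x, fderiv ℝ G 0 u (G 0 x) + G 0 (fderiv ℝ G 0 u x) = fderiv ℝ G 0 u x := by
    intro u x
    have h := (hG'.clm_comp hG').unique (hG'.congr_of_eventuallyEq hGproj)
    have := DFunLike.congr_fun (DFunLike.congr_fun h u) x
    simp at this
    rw [add_comm]; exact this
  have dsymm : ∀ u x z, ⟪fderiv ℝ G 0 u x, z⟫ = ⟪x, fderiv ℝ G 0 u z⟫ := by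
    intro u x z
    have a1 := (hG'.clm_apply (hasFDerivAt_const x 0)).inner ℝ (hasFDerivAt_const z 0)
    have a2 := (hasFDerivAt_const x 0).inner ℝ (hG'.clm_apply (hasFDerivAt_const z 0))
    have h := a1.unique (a2.congr_of_eventuallyEq (hGsymm x z))
    have := DFunLike.congr_fun h u
    simpa using this
  have dN : ∀ u, G 0 (fderiv ℝ N 0 u) + fderiv ℝ G 0 u (N 0) = 0 := by
    intro u
    have h := (hG'.clm_apply hN').unique ((hasFDerivAt_const (0 : (EuclideanSpace ℝ (Fin 3))) 0).congr_of_eventuallyEq hGN)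
    have := DFunLike.congr_fun h u
    simpa using this
  -- Codazzi
  have hcod : ∀ u w, fderiv ℝ G 0 u (fderiv ℝ φ 0 w) = fderiv ℝ G 0 w (fderiv ℝ φ 0 u) := by
    intro u w
    let c : (EuclideanSpace ℝ (Fin 3)) → (EuclideanSpace ℝ (Fin 3)) := fun y => φ y - R • N y
    have hcs : ContDiffAt ℝ ∞ c 0 := hφ.sub (hNs.const_smul R)
    have hc' : ∀ᶠ y in 𝓝 0, fderiv ℝ c y = (G y).comp (fderiv ℝ φ y) := by
      filter_upwards [hT] with y hy
      obtain ⟨hy0, hyd, hyt⟩ := hy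
      have hyM := hinM y hy0
      have hd1 : HasFDerivAt N ((fderiv ℝ ν (φ y)).comp (fderiv ℝ φ y)) y :=
        HasFDerivAt.comp y ((hνs _ hyM).differentiableAt (by simp)).hasFDerivAt hyd.hasFDerivAt
      have := (hyd.hasFDerivAt.sub (hd1.const_smul R)).fderiv
      ext1 v
      have hq : auxQ (ν (φ y)) (fderiv ℝ φ y v) = fderiv ℝ φ y v := by
        rw [auxQ_apply, (hperp _ hyM _).1 (hyt v)]; simp
      have e := DFunLike.congr_fun this v
      refine e.trans ?_
      simp [G, auxA, hq]
    have hφ'' : HasFDerivAt (fderiv ℝ φ) (fderiv ℝ (fderiv ℝ φ) 0) 0 :=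
      ((hφ.fderiv_right (m := ∞) (by simp)).differentiableAt (by simp)).hasFDerivAt
    have hc'' := ((hG'.clm_comp hφ'').congr_of_eventuallyEq hc').fderiv
    have s1 := hφ.isSymmSndFDerivAt (by rw [minSmoothness_of_isRCLikeNormedField]; exact WithTop.coe_le_coe.2 le_top) u w
    have s2 := hcs.isSymmSndFDerivAt (by rw [minSmoothness_of_isRCLikeNormedField]; exact WithTop.coe_le_coe.2 le_top) u w
    rw [hc''] at s2
    simp [s1] at s2
    exact s2
  obtain ⟨e₁, e₂, h1, h2, h12, h13, h23, hd1, hd2⟩ := hcurv p hp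
  have hG0 : ∀ x, G 0 x = ⟪e₁, x⟫ • e₁ := by
    intro x
    simp only [G, hφ0]
    exact auxA_apply R hR ν p e₁ e₂ (hn1 p hp) h1 h2 h12 h13 h23 hd1 hd2 x
  have hN0 : N 0 = ν p := by simp [N, hφ0]
  have t1 : fderiv ℝ φ 0 e₁ = e₁ := hφt _ ((hperp p hp _).2 (by rw [real_inner_comm]; exact h13))
  have t2 : fderiv ℝ φ 0 e₂ = e₂ := hφt _ ((hperp p hp _).2 (by rw [real_inner_comm]; exact h23))
  have n1 : fderiv ℝ G 0 e₁ (ν p) = 0 := by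
    have := dN e₁
    rw [hNchain, t1, hd1, hN0] at this; simpa using this
  have n2 : fderiv ℝ G 0 e₂ (ν p) = 0 := by
    have := dN e₂
    rw [hNchain, t2, hd2, hN0, map_smul, hG0, h12] at this; simpa using this
  have hBC : fderiv ℝ G 0 e₁ e₂ = fderiv ℝ G 0 e₂ e₁ := by
    have := hcod e₁ e₂; rwa [t1, t2] at this
  obtain ⟨hB, hC⟩ := aux_alg e₁ e₂ (ν p) h1 h2 (hn1 p hp) h12 h13 h23 (G 0) _ _ hG0
    (dproj e₁) (dproj e₂) (dsymm e₁) (dsymm e₂) n1 n2 hBC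
  rw [hGchain, t1] at hB
  rw [hGchain, t2] at hC
  intro v hv
  rw [aux_frame e₁ e₂ (ν p) h1 h2 (hn1 p hp) h12 h13 h23 v, (hperp p hp v).1 hv]
  rw [map_add, map_add, map_smul, map_smul, hB, hC, zero_smul, map_zero, smul_zero, smul_zero,
    add_zero, add_zero]

/-- A complete connected surface in ℝ³ with principal curvatures `0` and `1/R` is a round cylinder. -/
theorem stmt_15 (f : EuclideanSpace ℝ (Fin 3) → ℝ) (hf : ContDiff ℝ (⊤ : ℕ∞) f)
    (M : Set (EuclideanSpace ℝ (Fin 3))) (hM : M = f ⁻¹' {0})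
    (hne : M.Nonempty) (hconn : IsConnected M)
    (hreg : ∀ p ∈ M, gradient f p ≠ 0)
    (R : ℝ) (hR : 0 < R)
    (ν : EuclideanSpace ℝ (Fin 3) → EuclideanSpace ℝ (Fin 3))
    (hν : ∀ p, ν p = ‖gradient f p‖⁻¹ • gradient f p)
    (hcurv : ∀ p ∈ M, ∃ e₁ e₂ : EuclideanSpace ℝ (Fin 3),
      ‖e₁‖ = 1 ∧ ‖e₂‖ = 1 ∧ ⟪e₁, e₂⟫ = 0 ∧ ⟪e₁, ν p⟫ = 0 ∧ ⟪e₂, ν p⟫ = 0 ∧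
      fderiv ℝ ν p e₁ = 0 ∧ fderiv ℝ ν p e₂ = R⁻¹ • e₂) :
    ∃ (a d : EuclideanSpace ℝ (Fin 3)), ‖d‖ = 1 ∧
      M = {p | Metric.infDist p {x | ∃ t : ℝ, x = a + t • d} = R} := by
  have hn1 : ∀ q ∈ M, ‖ν q‖ = 1 := by
    intro q hq
    rw [hν, norm_smul, norm_inv, norm_norm, inv_mul_cancel₀ (by simpa using hreg q hq)]
  have hperp : ∀ q ∈ M, ∀ v, ⟪gradient f q, v⟫ = 0 ↔ ⟪ν q, v⟫ = 0 := by
    intro q hq v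
    rw [hν, real_inner_smul_left]; simp [hreg q hq]
  have hνs : ∀ q ∈ M, ContDiffAt ℝ ∞ ν q := fun q hq => aux_nu_smooth f hf ν hν q (hreg q hq)
  have hAc := aux_const f hf M hM hconn hreg (auxA R ν)
    (fun p hp => (auxA_smooth R ν p (hνs p hp)).differentiableAt (by simp))
    (fun p hp => aux_codazzi f hf M hM hreg R hR ν hν hcurv p hp)
  obtain ⟨p₀, hp₀⟩ := hne
  obtain ⟨d, e, hd, he, h12, h13, h23, hd1, hd2⟩ := hcurv p₀ hp₀
  have hA : ∀ p ∈ M, ∀ x, auxA R ν p x = ⟪d, x⟫ • d := by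
    intro p hp x
    rw [hAc p hp p₀ hp₀]
    exact auxA_apply R hR ν p₀ d e (hn1 p₀ hp₀) hd he h12 h13 h23 hd1 hd2 x
  have hdν : ∀ p ∈ M, ⟪d, ν p⟫ = 0 := by
    intro p hp
    have h0 : auxA R ν p (ν p) = 0 := by simp [auxA, auxQ_self _ (hn1 p hp)]
    rw [hA p hp] at h0
    have hd0 : d ≠ 0 := by rintro rfl; simp at hd
    simpa [hd0] using h0
  have hcc := aux_const f hf M hM hconn hreg (fun p => auxQ d (p - R • ν p))
    (fun p hp => by
      have := (hνs p hp).differentiableAt (by simp)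
      exact (auxQ d).differentiableAt.comp p (differentiableAt_id.sub (this.const_smul R)))
    (fun p hp v hv => by
      have h1 := ((hνs p hp).differentiableAt (by simp)).hasFDerivAt
      have h2 := (((auxQ d).hasFDerivAt (x := p - R • ν p)).comp p
        ((hasFDerivAt_id p).sub (h1.const_smul R))).fderiv
      have h3 := DFunLike.congr_fun h2 v
      refine h3.trans ?_
      have hq : auxQ (ν p) v = v := by rw [auxQ_apply, (hperp p hp v).1 hv]; simp
      have h4 : v - R • fderiv ℝ ν p v = ⟪d, v⟫ • d := by
        rw [← hA p hp v]; simp [auxA, hq]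
      have h5 : auxQ d (v - R • fderiv ℝ ν p v) = 0 := by
        rw [h4, map_smul, auxQ_self d hd, smul_zero]
      simpa using h5)
  set a := p₀ - R • ν p₀ with ha
  have hQ : ∀ p ∈ M, auxQ d (p - a) = R • ν p := by
    intro p hp
    have h1 := hcc p hp p₀ hp₀
    have h2 : auxQ d (ν p) = ν p := by rw [auxQ_apply, hdν p hp]; simp
    simp only [← ha] at h1
    rw [map_sub _ p, map_smul, h2] at h1
    rw [map_sub, ← h1]; abel
  refine ⟨a, d, hd, ?_⟩
  simp only [aux_infDist a d hd]
  apply aux_final f hf M hM ⟨p₀, hp₀⟩ R hR a d hd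
  · intro p hp
    rw [hQ p hp, norm_smul, hn1 p hp, Real.norm_of_nonneg hR.le, mul_one]
  · intro p hp
    rw [hQ p hp, aux_fderiv_eq, inner_smul_right, hν, inner_smul_right, real_inner_self_eq_norm_sq]
    have := norm_pos_iff.2 (hreg p hp)
    positivity
end

section
/- The only connected complete isoparametric hypersurfaces of ℝ³ (surfaces that locally arise as regular level sets of a function λ with |∇λ| and Δλ constant on level sets, equivalently surfaces with constant principal curvatures) are planes, round spheres, and round circular cylinders. -/
open scoped RealInnerProductSpace
open Filter Topology Set

/-- Straightening chart of a regular level set. -/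
theorem iso_chart {E : Type*} [NormedAddCommGroup E] [NormedSpace ℝ E] [CompleteSpace E]
    (f : E → ℝ) (hf : ContDiff ℝ (⊤ : ℕ∞) f) (p : E) (hp : f p = 0)
    (hL : fderiv ℝ f p ≠ 0) :
    ∃ Φ Ψ : E → E, ContinuousAt Φ p ∧ Φ p = 0 ∧ (∀ x, fderiv ℝ f p (Φ x) = f x) ∧
      (∀ᶠ x in 𝓝 p, Ψ (Φ x) = x) ∧ Ψ 0 = p ∧ ContDiffAt ℝ (⊤ : ℕ∞) Ψ 0 ∧
      HasFDerivAt Ψ (ContinuousLinearMap.id ℝ E) 0 ∧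
      (∀ᶠ y in 𝓝 (0 : E), f (Ψ y) = fderiv ℝ f p y) := by
  obtain ⟨n0, hn0⟩ : ∃ n0, fderiv ℝ f p n0 ≠ 0 := by
    by_contra! h
    exact hL (by ext x; simpa using h x)
  set L := fderiv ℝ f p with hLdef
  obtain ⟨n, hn⟩ : ∃ n, L n = 1 := ⟨(L n0)⁻¹ • n0, by simp [hn0]⟩
  let Φ : E → E := fun x => (x - p) - L (x - p) • n + f x • n
  have hΦ : ContDiff ℝ (⊤ : ℕ∞) Φ := by
    have h1 : ContDiff ℝ (⊤ : ℕ∞) (fun x : E => L (x - p)) :=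
      L.contDiff.comp (contDiff_id.sub contDiff_const)
    exact ((contDiff_id.sub contDiff_const).sub (h1.smul contDiff_const)).add
      (hf.smul contDiff_const)
  have hfd : HasFDerivAt f L p := (hf.differentiable (by simp)).differentiableAt.hasFDerivAt
  have hΦ' : HasFDerivAt Φ ((ContinuousLinearEquiv.refl ℝ E : E ≃L[ℝ] E) : E →L[ℝ] E) p := by
    have h0 : HasFDerivAt (fun x : E => x - p) (ContinuousLinearMap.id ℝ E) p :=
      (hasFDerivAt_id p).sub_const p
    have h1 : HasFDerivAt (fun x : E => L (x - p)) (L.comp (ContinuousLinearMap.id ℝ E)) p :=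
      L.hasFDerivAt.comp p h0
    have h2 := (h0.sub (h1.smul_const n)).add (hfd.smul_const n)
    convert! h2 using 1
    ext x
    simp
  have hL0 : ∀ x, L (Φ x) = f x := by intro x; simp [Φ, hn]
  have hΦp : Φ p = 0 := by simp [Φ, hp]
  have hs := hΦ.contDiffAt.hasStrictFDerivAt' hΦ' (by simp)
  have hci := (hΦ.contDiffAt (x := p)).to_localInverse hΦ' (by simp)
  refine ⟨Φ, hs.localInverse Φ _ p, hΦ.continuous.continuousAt, hΦp, hL0,
    hs.eventually_left_inverse, ?_, ?_, ?_, ?_⟩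
  · rw [← hΦp]; exact hs.localInverse_apply_image
  · rw [hΦp] at hci; exact hci
  · have := hs.to_localInverse.hasFDerivAt
    rw [hΦp] at this
    exact this
  · have := hs.eventually_right_inverse
    rw [hΦp] at this
    filter_upwards [this] with y hy
    rw [← hL0, hy]

/-- A function vanishing on a regular level set has vanishing tangential derivative. -/
theorem iso_tangential {E F : Type*} [NormedAddCommGroup E] [NormedSpace ℝ E] [CompleteSpace E]
    [NormedAddCommGroup F] [NormedSpace ℝ F]
    (f : E → ℝ) (hf : ContDiff ℝ (⊤ : ℕ∞) f) (p : E) (hp : f p = 0)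
    (hL : fderiv ℝ f p ≠ 0) (g : E → F) (g' : E →L[ℝ] F) (hg : HasFDerivAt g g' p)
    (h0 : ∀ x, f x = 0 → g x = 0) (u : E) (hu : fderiv ℝ f p u = 0) : g' u = 0 := by
  obtain ⟨Φ, Ψ, -, -, -, -, hΨ0, -, hΨ, hfΨ⟩ := iso_chart f hf p hp hL
  have hline : HasDerivAt (fun t : ℝ => t • u) u 0 := by
    simpa using (hasDerivAt_id (0 : ℝ)).smul_const u
  have h1 : HasDerivAt (fun t : ℝ => Ψ (t • u)) u 0 := by
    have h := HasFDerivAt.comp_hasDerivAt (x := (0 : ℝ)) (f := fun t : ℝ => t • u) (l := Ψ)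
      (l' := ContinuousLinearMap.id ℝ E) (by simpa using hΨ) hline
    simpa [Function.comp_def] using h
  have h2 : HasDerivAt (fun t : ℝ => g (Ψ (t • u))) (g' u) 0 := by
    have h := HasFDerivAt.comp_hasDerivAt (x := (0 : ℝ)) (f := fun t : ℝ => Ψ (t • u)) (l := g)
      (l' := g') (by simpa [hΨ0] using hg) h1
    simpa [Function.comp_def] using h
  have h3 : (fun t : ℝ => g (Ψ (t • u))) =ᶠ[𝓝 0] fun _ => 0 := by
    have hc : Tendsto (fun t : ℝ => t • u) (𝓝 0) (𝓝 0) := by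
      have := hline.continuousAt.tendsto
      simpa using this
    filter_upwards [hc.eventually hfΨ] with t ht
    apply h0
    rw [ht]; simp [hu]
  exact (h2.congr_of_eventuallyEq h3.symm).unique (hasDerivAt_const _ _)

/-- A function with vanishing tangential derivative is constant on a connected level set. -/
theorem iso_const {E F : Type*} [NormedAddCommGroup E] [NormedSpace ℝ E] [CompleteSpace E]
    [NormedAddCommGroup F] [NormedSpace ℝ F]
    (f : E → ℝ) (hf : ContDiff ℝ (⊤ : ℕ∞) f) (M : Set E) (hM : ∀ x, x ∈ M ↔ f x = 0)
    (hconn : IsPreconnected M)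
    (hL : ∀ p ∈ M, fderiv ℝ f p ≠ 0) (g : E → F)
    (hg : ∀ p ∈ M, ∃ g' : E →L[ℝ] F, HasFDerivAt g g' p ∧
      ∀ u, fderiv ℝ f p u = 0 → g' u = 0) :
    ∀ p ∈ M, ∀ q ∈ M, g p = g q := by
  have key : IsLocallyConstant (fun x : M => g x) := by
    rw [IsLocallyConstant.iff_eventually_eq]
    rintro ⟨p, hp⟩
    obtain ⟨Φ, Ψ, hΦc, hΦp, hLΦ, hΨΦ, hΨ0, hΨs, -, hfΨ⟩ :=
      iso_chart f hf p ((hM p).1 hp) (hL p hp)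
    have hd : ∀ᶠ y in 𝓝 (0 : E), DifferentiableAt ℝ Ψ y := by
      have : ContDiffAt ℝ 1 Ψ 0 := hΨs.of_le (by simp)
      filter_upwards [this.eventually (by simp)] with y hy
      exact hy.differentiableAt (by simp)
    obtain ⟨ε, hε, hball⟩ := Metric.eventually_nhds_iff_ball.1 (hd.and hfΨ)
    have hev : ∀ᶠ x in 𝓝 p, g x = g p ∨ x ∉ M := by
      have hb : ∀ᶠ x in 𝓝 p, Φ x ∈ Metric.ball (0 : E) ε := by
        apply hΦc.eventually
        rw [hΦp]; exact Metric.ball_mem_nhds _ hε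
      filter_upwards [hb, hΨΦ] with x hx hx2
      by_cases hxM : x ∈ M
      swap
      · exact Or.inr hxM
      left
      set y := Φ x with hy
      have hLy : fderiv ℝ f p y = 0 := by rw [hy, hLΦ]; exact (hM x).1 hxM
      have hsy : ∀ s ∈ Icc (0 : ℝ) 1, s • y ∈ Metric.ball (0 : E) ε := by
        intro s hs
        rw [mem_ball_zero_iff] at hx ⊢
        rw [norm_smul, Real.norm_of_nonneg hs.1]
        exact lt_of_le_of_lt (mul_le_of_le_one_left (norm_nonneg _) hs.2) hx
      have hder : ∀ s ∈ Icc (0 : ℝ) 1, HasDerivAt (fun s : ℝ => g (Ψ (s • y))) 0 s := by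
        intro s hs
        have hm := hsy s hs
        have hline : HasDerivAt (fun t : ℝ => t • y) y s := by
          simpa using (hasDerivAt_id s).smul_const y
        have h1 : HasDerivAt (fun t : ℝ => Ψ (t • y)) (fderiv ℝ Ψ (s • y) y) s :=
          HasFDerivAt.comp_hasDerivAt (x := s) (f := fun t : ℝ => t • y) (l := Ψ)
            (hball _ hm).1.hasFDerivAt hline
        have hMs : Ψ (s • y) ∈ M := by
          rw [hM, (hball _ hm).2]; simp [hLy]
        obtain ⟨g', hg', hg0⟩ := hg _ hMs
        have h2 : HasDerivAt (fun t : ℝ => g (Ψ (t • y))) (g' (fderiv ℝ Ψ (s • y) y)) s :=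
          HasFDerivAt.comp_hasDerivAt (x := s) (f := fun t : ℝ => Ψ (t • y)) (l := g)
            hg' h1
        have h3 : HasDerivAt (fun t : ℝ => f (Ψ (t • y)))
            (fderiv ℝ f (Ψ (s • y)) (fderiv ℝ Ψ (s • y) y)) s :=
          HasFDerivAt.comp_hasDerivAt (x := s) (f := fun t : ℝ => Ψ (t • y)) (l := f)
            (hf.differentiable (by simp)).differentiableAt.hasFDerivAt h1
        have h4 : (fun t : ℝ => f (Ψ (t • y))) =ᶠ[𝓝 s] fun _ => 0 := by
          have hn : ∀ᶠ t in 𝓝 s, t • y ∈ Metric.ball (0 : E) ε :=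
            hline.continuousAt.eventually (Metric.isOpen_ball.mem_nhds hm)
          filter_upwards [hn] with t ht
          rw [(hball _ ht).2]; simp [hLy]
        have h5 := (h3.congr_of_eventuallyEq h4.symm).unique (hasDerivAt_const _ _)
        rw [hg0 _ h5] at h2
        exact h2
      have := constant_of_has_deriv_right_zero (f := fun s : ℝ => g (Ψ (s • y)))
        (a := 0) (b := 1) (fun s hs => (hder s hs).continuousAt.continuousWithinAt)
        (fun s hs => (hder s (Ico_subset_Icc_self hs)).hasDerivWithinAt) 1 (by simp)
      simpa [hx2, hΨ0] using this
    have := (continuous_subtype_val.tendsto (⟨p, hp⟩ : M)).eventually hev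
    filter_upwards [this] with x hx
    exact hx.resolve_right (fun h => h x.2)
  intro p hp q hq
  have : PreconnectedSpace M := Subtype.preconnectedSpace hconn
  exact key.apply_eq_of_preconnectedSpace ⟨p, hp⟩ ⟨q, hq⟩

/-- Integral curves of tangent fields stay in the level set. -/
theorem iso_flow_nonneg {E : Type*} [NormedAddCommGroup E] [NormedSpace ℝ E] [CompleteSpace E]
    (f : E → ℝ) (hf : ContDiff ℝ (⊤ : ℕ∞) f)
    (hL : ∀ p, f p = 0 → fderiv ℝ f p ≠ 0) (Y : E → E) (hY : ContDiff ℝ (⊤ : ℕ∞) Y)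
    (hYt : ∀ p, f p = 0 → fderiv ℝ f p (Y p) = 0)
    (γ : ℝ → E) (hγ : ∀ t, HasDerivAt γ (Y (γ t)) t) (h0 : f (γ 0) = 0) :
    ∀ t, 0 ≤ t → f (γ t) = 0 := by
  have hbound : ∀ p, f p = 0 → ∃ K : ℝ, ∀ᶠ x in 𝓝 p, ‖fderiv ℝ f x (Y x)‖ ≤ K * ‖f x‖ := by
    intro p hp
    obtain ⟨Φ, Ψ, hΦc, hΦp, hLΦ, hΨΦ, hΨ0, hΨs, -, hfΨ⟩ := iso_chart f hf p hp (hL p hp)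
    obtain ⟨n0, hn0⟩ : ∃ n0, fderiv ℝ f p n0 ≠ 0 := by
      by_contra! h
      exact hL p hp (by ext x; simpa using h x)
    set L := fderiv ℝ f p with hLdef
    obtain ⟨n, hn⟩ : ∃ n, L n = 1 := ⟨(L n0)⁻¹ • n0, by simp [hn0]⟩
    have hh : ContDiff ℝ 1 (fun x => fderiv ℝ f x (Y x)) :=
      ((hf.fderiv_right (m := (⊤ : ℕ∞)) (by simp)).of_le (by simp)).clm_apply (hY.of_le (by simp))
    have hhΨ : ContDiffAt ℝ 1 (fun y => fderiv ℝ f (Ψ y) (Y (Ψ y))) 0 :=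
      ContDiffAt.comp (0 : E) (hh.contDiffAt) (hΨs.of_le (by simp))
    obtain ⟨K, s, hs, hlip⟩ := hhΨ.exists_lipschitzOnWith
    refine ⟨K * ‖n‖, ?_⟩
    have hΦt : Tendsto Φ (𝓝 p) (𝓝 0) := by
      have := hΦc.tendsto; rwa [hΦp] at this
    have hpr : Tendsto (fun y => y - L y • n) (𝓝 (0 : E)) (𝓝 0) := by
      have : Continuous (fun y => y - L y • n) := by fun_prop
      simpa using this.tendsto 0
    filter_upwards [hΨΦ, hΦt.eventually hs, (hpr.comp hΦt).eventually hs,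
      (hpr.comp hΦt).eventually hfΨ] with x h1 h2 h3 h4
    have h5 : f (Ψ (Φ x - L (Φ x) • n)) = 0 := by
      simp only [Function.comp] at h4
      rw [h4]; simp [hn]
    have h6 := hlip.norm_sub_le h2 h3
    simp only [Function.comp] at h6
    rw [hYt _ h5, h1, sub_zero, hLΦ] at h6
    refine h6.trans (le_of_eq ?_)
    rw [sub_sub_cancel, norm_smul]; ring
  intro T hT
  have hfc : Continuous (fun t => f (γ t)) :=
    hf.continuous.comp (continuous_iff_continuousAt.2 fun t => (hγ t).continuousAt)
  have hcl : IsClosed {t : ℝ | f (γ t) = 0} := isClosed_eq hfc continuous_const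
  have := IsClosed.Icc_subset_of_forall_mem_nhdsWithin (a := 0) (b := T)
    (s := {t : ℝ | f (γ t) = 0}) (hcl.inter isClosed_Icc) h0 (by
      rintro t ⟨ht, -⟩
      obtain ⟨K, hK⟩ := hbound (γ t) ht
      have h1 := (hγ t).continuousAt.eventually hK
      obtain ⟨ε, hε, hb⟩ := Metric.eventually_nhds_iff_ball.1 h1
      have h2 := eq_zero_of_abs_deriv_le_mul_abs_self_of_eq_zero_right
        (f := fun s => f (γ s)) (f' := fun s => fderiv ℝ f (γ s) (Y (γ s)))
        (K := K) (a := t) (b := t + ε / 2) hfc.continuousOn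
        (fun s _ => (HasFDerivAt.comp_hasDerivAt (x := s) (f := γ) (l := f)
          (hf.differentiable (by simp)).differentiableAt.hasFDerivAt (hγ s)).hasDerivWithinAt)
        ht (fun s hs => hb s (by
          rw [Metric.mem_ball, Real.dist_eq, abs_lt]
          constructor <;> linarith [hs.1, hs.2]))
      refine mem_of_superset (Ioc_mem_nhdsGT (show t < t + ε / 2 by linarith)) ?_
      intro s hs
      exact h2 s (Ioc_subset_Icc_self hs))
  exact this ⟨hT, le_refl T⟩

theorem iso_flow {E : Type*} [NormedAddCommGroup E] [NormedSpace ℝ E] [CompleteSpace E]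
    (f : E → ℝ) (hf : ContDiff ℝ (⊤ : ℕ∞) f)
    (hL : ∀ p, f p = 0 → fderiv ℝ f p ≠ 0) (Y : E → E) (hY : ContDiff ℝ (⊤ : ℕ∞) Y)
    (hYt : ∀ p, f p = 0 → fderiv ℝ f p (Y p) = 0)
    (γ : ℝ → E) (hγ : ∀ t, HasDerivAt γ (Y (γ t)) t) (h0 : f (γ 0) = 0) :
    ∀ t, f (γ t) = 0 := by
  intro t
  rcases le_total 0 t with ht | ht
  · exact iso_flow_nonneg f hf hL Y hY hYt γ hγ h0 t ht
  · have := iso_flow_nonneg f hf hL (fun x => - Y x) hY.neg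
      (fun p hp => by simp [hYt p hp]) (fun t => γ (-t))
      (fun t => by
        have := (hγ (-t)).scomp t (hasDerivAt_neg t)
        simpa [Function.comp_def] using this) (by simpa using h0) (-t) (by linarith)
    simpa using this

theorem iso_angle (a b d : EuclideanSpace ℝ (Fin 3)) (r : ℝ) (hr : 0 < r)
    (ha : ‖a‖ = r) (hb : ‖b‖ = r) (had : ⟪a, d⟫ = 0) (hbd : ⟪b, d⟫ = 0) :
    ∃ (v : EuclideanSpace ℝ (Fin 3)) (t : ℝ), ⟪v, a⟫ = 0 ∧ ⟪v, d⟫ = 0 ∧ ‖v‖ = r ∧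
      b = Real.cos t • a + Real.sin t • v := by
  set α := ⟪a, b⟫ / r ^ 2 with hα
  have haa : ⟪a, a⟫ = r ^ 2 := by rw [real_inner_self_eq_norm_sq, ha]
  have hbb : ⟪b, b⟫ = r ^ 2 := by rw [real_inner_self_eq_norm_sq, hb]
  have hab : ⟪a, b⟫ = α * r ^ 2 := by rw [hα]; field_simp
  set w := b - α • a with hw
  have hwa : ⟪w, a⟫ = 0 := by
    rw [hw, inner_sub_left, inner_smul_left, haa, real_inner_comm, hab]; simp
  have hwd : ⟪w, d⟫ = 0 := by
    rw [hw, inner_sub_left, inner_smul_left, had, hbd]; simp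
  have hww : ‖w‖ ^ 2 = r ^ 2 * (1 - α ^ 2) := by
    rw [← real_inner_self_eq_norm_sq, hw, inner_sub_left, inner_sub_right, inner_sub_right,
      inner_smul_left, inner_smul_left, inner_smul_right, inner_smul_right, haa, hbb,
      real_inner_comm, hab]
    simp; ring
  obtain ⟨v, hva, hvd, hvr, hwv⟩ : ∃ v : EuclideanSpace ℝ (Fin 3), ⟪v, a⟫ = 0 ∧ ⟪v, d⟫ = 0 ∧
      ‖v‖ = r ∧ w = (‖w‖ / r) • v := by
    by_cases hw0 : w = 0
    · obtain ⟨v0, hv0, hv0a, hv0d⟩ : ∃ v0 : EuclideanSpace ℝ (Fin 3), v0 ≠ 0 ∧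
          ⟪a, v0⟫ = 0 ∧ ⟪d, v0⟫ = 0 := by
        let T : EuclideanSpace ℝ (Fin 3) →ₗ[ℝ] ℝ × ℝ :=
          (innerₗ (EuclideanSpace ℝ (Fin 3)) a).prod (innerₗ (EuclideanSpace ℝ (Fin 3)) d)
        have hker : LinearMap.ker T ≠ ⊥ := by
          apply LinearMap.ker_ne_bot_of_finrank_lt
          simp
        obtain ⟨v0, hv0, hne⟩ := Submodule.exists_mem_ne_zero_of_ne_bot hker
        rw [LinearMap.mem_ker] at hv0
        have h1 := congrArg Prod.fst hv0
        have h2 := congrArg Prod.snd hv0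
        exact ⟨v0, hne, by simpa [T] using h1, by simpa [T] using h2⟩
      refine ⟨(r / ‖v0‖) • v0, ?_, ?_, ?_, ?_⟩
      · rw [inner_smul_left, real_inner_comm, hv0a]; simp
      · rw [inner_smul_left, real_inner_comm, hv0d]; simp
      · rw [norm_smul, Real.norm_of_nonneg (by positivity)]
        have : ‖v0‖ ≠ 0 := norm_ne_zero_iff.2 hv0
        field_simp
      · simp [hw0]
    · have hwn : ‖w‖ ≠ 0 := norm_ne_zero_iff.2 hw0
      refine ⟨(r / ‖w‖) • w, ?_, ?_, ?_, ?_⟩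
      · rw [inner_smul_left, hwa]; simp
      · rw [inner_smul_left, hwd]; simp
      · rw [norm_smul, Real.norm_of_nonneg (by positivity)]
        field_simp
      · rw [smul_smul]
        have : ‖w‖ / r * (r / ‖w‖) = 1 := by field_simp
        rw [this, one_smul]
  have hα2 : α ^ 2 ≤ 1 := by
    have h1 : 0 ≤ r ^ 2 * (1 - α ^ 2) := hww ▸ sq_nonneg _
    have h2 : 0 < r ^ 2 := by positivity
    nlinarith [nonneg_of_mul_nonneg_right h1 h2]
  have hα3 := abs_le.1 ((sq_le_one_iff_abs_le_one α).1 hα2)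
  refine ⟨v, Real.arccos α, hva, hvd, hvr, ?_⟩
  have hsin : Real.sin (Real.arccos α) = ‖w‖ / r := by
    rw [Real.sin_arccos, Real.sqrt_eq_iff_mul_self_eq (by linarith) (by positivity)]
    field_simp
    rw [hww]; ring
  rw [Real.cos_arccos hα3.1 hα3.2, hsin, ← hwv, hw]
  abel

theorem iso_full (f : EuclideanSpace ℝ (Fin 3) → ℝ) (hf : ContDiff ℝ (⊤ : ℕ∞) f)
    (hL : ∀ p, f p = 0 → fderiv ℝ f p ≠ 0)
    (ν : EuclideanSpace ℝ (Fin 3) → EuclideanSpace ℝ (Fin 3))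
    (hν1 : ∀ p, f p = 0 → ‖ν p‖ = 1)
    (hT : ∀ p u, f p = 0 → ⟪u, ν p⟫ = 0 → fderiv ℝ f p u = 0)
    (d c p₀ : EuclideanSpace ℝ (Fin 3)) (k : ℝ) (hk : k ≠ 0) (hp₀ : f p₀ = 0)
    (hd : ⟪d, d⟫ = 1 ∨ d = 0) (hdc : ⟪d, c⟫ = 0) (hdν : ∀ p, f p = 0 → ⟪d, ν p⟫ = 0)
    (hform : ∀ p, f p = 0 → k⁻¹ • ν p = p - ⟪d, p⟫ • d - c)
    (q : EuclideanSpace ℝ (Fin 3)) (hq : ‖q - ⟪d, q⟫ • d - c‖ = |k|⁻¹) : f q = 0 := by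
  have hr : 0 < |k|⁻¹ := inv_pos.2 (abs_pos.2 hk)
  set r := |k|⁻¹ with hrdef
  set a := p₀ - ⟪d, p₀⟫ • d - c with ha
  set b := q - ⟪d, q⟫ • d - c with hb
  have haf := hform p₀ hp₀
  rw [← ha] at haf
  have har : ‖a‖ = r := by
    rw [← haf, norm_smul, hν1 _ hp₀, norm_inv, Real.norm_eq_abs, mul_one]
  have had : ⟪a, d⟫ = 0 := by
    rw [← haf, inner_smul_left, real_inner_comm, hdν _ hp₀]; simp
  have hbd : ⟪b, d⟫ = 0 := by
    rcases hd with hd | hd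
    · rw [hb, inner_sub_left, inner_sub_left, inner_smul_left, hd, real_inner_comm d c,
        real_inner_comm d q, hdc]
      simp
    · simp [hd]
  obtain ⟨v, t, hva, hvd, hvr, hbt⟩ := iso_angle a b d r hr har hq had hbd
  have haa : ⟪a, a⟫ = r ^ 2 := by rw [real_inner_self_eq_norm_sq, har]
  have hvv : ⟪v, v⟫ = r ^ 2 := by rw [real_inner_self_eq_norm_sq, hvr]
  have hav : ⟪a, v⟫ = 0 := by rw [real_inner_comm]; exact hva
  have hxc : ∀ p, f p = 0 → p - c = k⁻¹ • ν p + ⟪d, p⟫ • d := by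
    intro p hp; rw [hform p hp]; abel
  have step1 := iso_flow f hf hL
    (fun x => (r ^ 2)⁻¹ • (⟪a, x - c⟫ • v - ⟪v, x - c⟫ • a))
    (by
      have h1 : ∀ z : EuclideanSpace ℝ (Fin 3),
          ContDiff ℝ (⊤ : ℕ∞) (fun x => ⟪z, x - c⟫) := fun z =>
        contDiff_const.inner ℝ (contDiff_id.sub contDiff_const)
      exact (((h1 a).smul contDiff_const).sub ((h1 v).smul contDiff_const)).const_smul _)
    (by
      intro p hp
      apply hT p _ hp
      rw [hxc p hp]
      simp only [inner_add_right, inner_smul_right, had, hvd, inner_smul_left, inner_sub_left]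
      simp; right; ring)
    (fun t => c + ⟪d, p₀⟫ • d + Real.cos t • a + Real.sin t • v)
    (by
      intro t
      have h := (((Real.hasDerivAt_cos t).smul_const a).const_add (c + ⟪d, p₀⟫ • d)).add
        ((Real.hasDerivAt_sin t).smul_const v)
      convert! h using 1
      have e1 : c + ⟪d, p₀⟫ • d + Real.cos t • a + Real.sin t • v - c
        = ⟪d, p₀⟫ • d + Real.cos t • a + Real.sin t • v := by abel
      have e2 : (r ^ 2)⁻¹ * (Real.cos t * r ^ 2) = Real.cos t := by field_simp
      have e3 : (r ^ 2)⁻¹ * (Real.sin t * r ^ 2) = Real.sin t := by field_simp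
      rw [e1]
      simp only [inner_add_right, inner_smul_right, had, hvd, haa, hvv, hva, hav, mul_zero,
        zero_add, add_zero, smul_sub, smul_smul, e2, e3]
      rw [neg_smul]; abel)
    (by
      have : c + ⟪d, p₀⟫ • d + Real.cos 0 • a + Real.sin 0 • v = p₀ := by
        simp only [Real.cos_zero, Real.sin_zero, one_smul, zero_smul, add_zero, ha]; abel
      rw [this]; exact hp₀) t
  have step2 := iso_flow f hf hL (fun _ => d) contDiff_const
    (fun p hp => hT p _ hp (hdν p hp))
    (fun s => (c + ⟪d, p₀⟫ • d + Real.cos t • a + Real.sin t • v) + s • d)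
    (by
      intro s
      have := ((hasDerivAt_id s).smul_const d).const_add
        (c + ⟪d, p₀⟫ • d + Real.cos t • a + Real.sin t • v)
      simpa using this)
    (by simpa using step1) (⟪d, q⟫ - ⟪d, p₀⟫)
  have : c + ⟪d, p₀⟫ • d + Real.cos t • a + Real.sin t • v + (⟪d, q⟫ - ⟪d, p₀⟫) • d = q := by
    rw [add_assoc (c + ⟪d, p₀⟫ • d), ← hbt, hb, sub_smul]; abel
  rwa [this] at step2

/-- Tangential projection along a unit field. -/
noncomputable def isoP (ν : EuclideanSpace ℝ (Fin 3) → EuclideanSpace ℝ (Fin 3))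
    (x : EuclideanSpace ℝ (Fin 3)) : EuclideanSpace ℝ (Fin 3) →L[ℝ] EuclideanSpace ℝ (Fin 3) :=
  ContinuousLinearMap.id ℝ _ - (innerSL ℝ (ν x)).smulRight (ν x)

/-- Spectral projection of the (extended) Weingarten map. -/
noncomputable def isoQ (ν : EuclideanSpace ℝ (Fin 3) → EuclideanSpace ℝ (Fin 3)) (k₁ k₂ : ℝ)
    (x : EuclideanSpace ℝ (Fin 3)) : EuclideanSpace ℝ (Fin 3) →L[ℝ] EuclideanSpace ℝ (Fin 3) :=
  (k₁ - k₂)⁻¹ • ((fderiv ℝ ν x).comp (isoP ν x) - k₂ • isoP ν x)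

theorem isoP_apply (ν : EuclideanSpace ℝ (Fin 3) → EuclideanSpace ℝ (Fin 3))
    (x a : EuclideanSpace ℝ (Fin 3)) : isoP ν x a = a - ⟪ν x, a⟫ • ν x := by
  simp [isoP]

theorem isoQ_apply (ν : EuclideanSpace ℝ (Fin 3) → EuclideanSpace ℝ (Fin 3)) (k₁ k₂ : ℝ)
    (x a : EuclideanSpace ℝ (Fin 3)) : isoQ ν k₁ k₂ x a =
      (k₁ - k₂)⁻¹ • (fderiv ℝ ν x (isoP ν x a) - k₂ • isoP ν x a) := by
  simp [isoQ]

theorem isoP_smooth (ν : EuclideanSpace ℝ (Fin 3) → EuclideanSpace ℝ (Fin 3))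
    (p : EuclideanSpace ℝ (Fin 3)) (h : ContDiffAt ℝ (⊤ : ℕ∞) ν p) :
    ContDiffAt ℝ (⊤ : ℕ∞) (isoP ν) p := by
  unfold isoP
  have h1 : ContDiffAt ℝ (⊤ : ℕ∞) (fun x => innerSL ℝ (ν x)) p :=
    (innerSL ℝ (E := EuclideanSpace ℝ (Fin 3))).contDiff.contDiffAt.comp p h
  exact contDiffAt_const.sub (h1.smulRight h)

theorem iso_fderiv_smooth (ν : EuclideanSpace ℝ (Fin 3) → EuclideanSpace ℝ (Fin 3))
    (p : EuclideanSpace ℝ (Fin 3)) (h : ContDiffAt ℝ (⊤ : ℕ∞) ν p) :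
    ContDiffAt ℝ (⊤ : ℕ∞) (fderiv ℝ ν) p :=
  h.fderiv_right (by simp)

theorem isoQ_smooth (ν : EuclideanSpace ℝ (Fin 3) → EuclideanSpace ℝ (Fin 3)) (k₁ k₂ : ℝ)
    (p : EuclideanSpace ℝ (Fin 3)) (h : ContDiffAt ℝ (⊤ : ℕ∞) ν p) :
    ContDiffAt ℝ (⊤ : ℕ∞) (isoQ ν k₁ k₂) p := by
  unfold isoQ
  have hP := isoP_smooth ν p h
  exact (((iso_fderiv_smooth ν p h).clm_comp hP).sub (hP.const_smul k₂)).const_smul _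

theorem iso_hasFDerivAt_apply {F : Type*} [NormedAddCommGroup F] [NormedSpace ℝ F]
    (A : EuclideanSpace ℝ (Fin 3) → EuclideanSpace ℝ (Fin 3) →L[ℝ] F)
    (p a : EuclideanSpace ℝ (Fin 3)) (h : DifferentiableAt ℝ A p) :
    HasFDerivAt (fun x => A x a) ((fderiv ℝ A p).flip a) p := by
  have := h.hasFDerivAt.clm_apply (hasFDerivAt_const a p)
  simpa using this

theorem isoP_fderiv (ν : EuclideanSpace ℝ (Fin 3) → EuclideanSpace ℝ (Fin 3))
    (p : EuclideanSpace ℝ (Fin 3)) (h : ContDiffAt ℝ (⊤ : ℕ∞) ν p)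
    (u a : EuclideanSpace ℝ (Fin 3)) :
    fderiv ℝ (isoP ν) p u a = -(⟪fderiv ℝ ν p u, a⟫ • ν p + ⟪ν p, a⟫ • fderiv ℝ ν p u) := by
  have h1 := iso_hasFDerivAt_apply (isoP ν) p a ((isoP_smooth ν p h).differentiableAt (by simp))
  have hν := (h.differentiableAt (by simp)).hasFDerivAt
  have h2 := (hasFDerivAt_const a p).sub ((hν.inner ℝ (hasFDerivAt_const a p)).smul hν)
  have h3 : (fun x => isoP ν x a) = fun x => a - ⟪ν x, a⟫ • ν x := by
    funext x; exact isoP_apply ν x a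
  rw [h3] at h1
  have h4 := congrArg (fun A => A u) (h1.unique h2)
  simp at h4
  rw [h4]; abel

theorem iso_symm2 {F : Type*} [NormedAddCommGroup F] [NormedSpace ℝ F]
    (g : EuclideanSpace ℝ (Fin 3) → F) (p : EuclideanSpace ℝ (Fin 3))
    (h : ContDiffAt ℝ (⊤ : ℕ∞) g p) (u v : EuclideanSpace ℝ (Fin 3)) :
    fderiv ℝ (fderiv ℝ g) p u v = fderiv ℝ (fderiv ℝ g) p v u := by
  have : IsSymmSndFDerivAt ℝ g p := h.isSymmSndFDerivAt (by
    simp only [minSmoothness_of_isRCLikeNormedField]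
    exact WithTop.coe_le_coe.2 (le_top : (2 : ℕ∞) ≤ ⊤))
  exact this u v

theorem isoQ_fderiv (ν : EuclideanSpace ℝ (Fin 3) → EuclideanSpace ℝ (Fin 3)) (k₁ k₂ : ℝ)
    (p : EuclideanSpace ℝ (Fin 3)) (h : ContDiffAt ℝ (⊤ : ℕ∞) ν p)
    (u a : EuclideanSpace ℝ (Fin 3)) :
    fderiv ℝ (isoQ ν k₁ k₂) p u a = (k₁ - k₂)⁻¹ •
      (fderiv ℝ ν p (fderiv ℝ (isoP ν) p u a) + fderiv ℝ (fderiv ℝ ν) p u (isoP ν p a)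
        - k₂ • fderiv ℝ (isoP ν) p u a) := by
  have h1 := iso_hasFDerivAt_apply (isoQ ν k₁ k₂) p a
    ((isoQ_smooth ν k₁ k₂ p h).differentiableAt (by simp))
  have hP := iso_hasFDerivAt_apply (isoP ν) p a ((isoP_smooth ν p h).differentiableAt (by simp))
  have hν := ((iso_fderiv_smooth ν p h).differentiableAt (by simp)).hasFDerivAt
  have h2 := ((hν.clm_apply hP).sub (hP.const_smul k₂)).const_smul (k₁ - k₂)⁻¹
  have h3 : (fun x => isoQ ν k₁ k₂ x a) = fun x =>
      (k₁ - k₂)⁻¹ • (fderiv ℝ ν x (isoP ν x a) - k₂ • isoP ν x a) := by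
    funext x; exact isoQ_apply ν k₁ k₂ x a
  rw [h3] at h1
  have h4 := congrArg (fun A => A u) (h1.unique h2)
  simpa using h4

theorem iso_expand (e w n : EuclideanSpace ℝ (Fin 3)) (he : ‖e‖ = 1) (hw : ‖w‖ = 1)
    (hn : ‖n‖ = 1) (hew : ⟪e, w⟫ = 0) (hen : ⟪e, n⟫ = 0) (hwn : ⟪w, n⟫ = 0)
    (a : EuclideanSpace ℝ (Fin 3)) :
    a = ⟪e, a⟫ • e + ⟪w, a⟫ • w + ⟪n, a⟫ • n := by
  have ho : Orthonormal ℝ ![e, w, n] := by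
    constructor
    · intro i; fin_cases i <;> simp [he, hw, hn]
    · intro i j hij
      have hwe : ⟪w, e⟫ = 0 := by rw [real_inner_comm]; exact hew
      have hne : ⟪n, e⟫ = 0 := by rw [real_inner_comm]; exact hen
      have hnw : ⟪n, w⟫ = 0 := by rw [real_inner_comm]; exact hwn
      fin_cases i <;> fin_cases j <;> simp_all
  have hspan : ⊤ ≤ Submodule.span ℝ (Set.range ![e, w, n]) := by
    rw [ho.linearIndependent.span_eq_top_of_card_eq_finrank (by simp)]
  have h := (OrthonormalBasis.mk ho hspan).sum_repr' a
  simp [Fin.sum_univ_three] at h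
  exact h.symm

/-- Bundled data of a regular level set with constant principal curvatures. -/
structure IsoData (f : EuclideanSpace ℝ (Fin 3) → ℝ)
    (ν : EuclideanSpace ℝ (Fin 3) → EuclideanSpace ℝ (Fin 3)) (k₁ k₂ : ℝ) : Prop where
  hf : ContDiff ℝ (⊤ : ℕ∞) f
  hL : ∀ p, f p = 0 → fderiv ℝ f p ≠ 0
  hs : ∀ p, f p = 0 → ContDiffAt ℝ (⊤ : ℕ∞) ν p
  h1 : ∀ p, f p = 0 → ‖ν p‖ = 1
  hT : ∀ p u, f p = 0 → (⟪u, ν p⟫ = 0 ↔ fderiv ℝ f p u = 0)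
  hcurv : ∀ p, f p = 0 → ∃ e₁ e₂ : EuclideanSpace ℝ (Fin 3),
      ‖e₁‖ = 1 ∧ ‖e₂‖ = 1 ∧ ⟪e₁, e₂⟫ = 0 ∧ ⟪e₁, ν p⟫ = 0 ∧ ⟪e₂, ν p⟫ = 0 ∧
      fderiv ℝ ν p e₁ = k₁ • e₁ ∧ fderiv ℝ ν p e₂ = k₂ • e₂

/-- Adapted frame at a point. -/
structure IsoFrame (ν : EuclideanSpace ℝ (Fin 3) → EuclideanSpace ℝ (Fin 3)) (k₁ k₂ : ℝ)
    (p e w : EuclideanSpace ℝ (Fin 3)) : Prop where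
  ee : ⟪e, e⟫ = 1
  ww : ⟪w, w⟫ = 1
  nn : ⟪ν p, ν p⟫ = 1
  ew : ⟪e, w⟫ = 0
  we : ⟪w, e⟫ = 0
  en : ⟪e, ν p⟫ = 0
  ne : ⟪ν p, e⟫ = 0
  wn : ⟪w, ν p⟫ = 0
  nw : ⟪ν p, w⟫ = 0
  De : fderiv ℝ ν p e = k₁ • e
  Dw : fderiv ℝ ν p w = k₂ • w
  expand : ∀ a, a = ⟪e, a⟫ • e + ⟪w, a⟫ • w + ⟪ν p, a⟫ • ν p

theorem IsoData.frame {f : EuclideanSpace ℝ (Fin 3) → ℝ}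
    {ν : EuclideanSpace ℝ (Fin 3) → EuclideanSpace ℝ (Fin 3)} {k₁ k₂ : ℝ}
    (D : IsoData f ν k₁ k₂) {p : EuclideanSpace ℝ (Fin 3)} (hp : f p = 0) :
    ∃ e w, IsoFrame ν k₁ k₂ p e w := by
  obtain ⟨e, w, he, hw, hew, hen, hwn, hDe, hDw⟩ := D.hcurv p hp
  have hn := D.h1 p hp
  exact ⟨e, w, by simp [he], by simp [hw], by simp [hn], hew,
    by rw [real_inner_comm, hew], hen, by rw [real_inner_comm, hen], hwn,
    by rw [real_inner_comm, hwn], hDe, hDw, iso_expand e w (ν p) he hw hn hew hen hwn⟩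

theorem IsoFrame.P_apply {ν : EuclideanSpace ℝ (Fin 3) → EuclideanSpace ℝ (Fin 3)} {k₁ k₂ : ℝ}
    {p e w : EuclideanSpace ℝ (Fin 3)} (F : IsoFrame ν k₁ k₂ p e w)
    (a : EuclideanSpace ℝ (Fin 3)) : isoP ν p a = ⟪e, a⟫ • e + ⟪w, a⟫ • w := by
  rw [isoP_apply]
  nth_rewrite 1 [F.expand a]
  abel

theorem IsoFrame.Q_apply {ν : EuclideanSpace ℝ (Fin 3) → EuclideanSpace ℝ (Fin 3)} {k₁ k₂ : ℝ}
    {p e w : EuclideanSpace ℝ (Fin 3)} (F : IsoFrame ν k₁ k₂ p e w) (hk : k₁ ≠ k₂)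
    (a : EuclideanSpace ℝ (Fin 3)) : isoQ ν k₁ k₂ p a = ⟪e, a⟫ • e := by
  have hk' : k₁ - k₂ ≠ 0 := sub_ne_zero.2 hk
  rw [isoQ_apply, F.P_apply, map_add, map_smul, map_smul, F.De, F.Dw]
  have : ⟪e, a⟫ • k₁ • e + ⟪w, a⟫ • k₂ • w - k₂ • (⟪e, a⟫ • e + ⟪w, a⟫ • w)
      = (k₁ - k₂) • ⟪e, a⟫ • e := by module
  rw [this, smul_smul, inv_mul_cancel₀ hk', one_smul]

theorem IsoFrame.D_apply {ν : EuclideanSpace ℝ (Fin 3) → EuclideanSpace ℝ (Fin 3)} {k₁ k₂ : ℝ}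
    {p e w : EuclideanSpace ℝ (Fin 3)} (F : IsoFrame ν k₁ k₂ p e w)
    (u : EuclideanSpace ℝ (Fin 3)) (hu : ⟪ν p, u⟫ = 0) :
    fderiv ℝ ν p u = (k₁ * ⟪e, u⟫) • e + (k₂ * ⟪w, u⟫) • w := by
  conv_lhs => rw [F.expand u, hu]
  rw [zero_smul, add_zero, map_add, map_smul, map_smul, F.De, F.Dw]
  module

theorem IsoData.codazzi {f : EuclideanSpace ℝ (Fin 3) → ℝ}
    {ν : EuclideanSpace ℝ (Fin 3) → EuclideanSpace ℝ (Fin 3)} {k₁ k₂ : ℝ}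
    (D : IsoData f ν k₁ k₂) {p : EuclideanSpace ℝ (Fin 3)} (hp : f p = 0)
    (u v : EuclideanSpace ℝ (Fin 3)) (hu : ⟪ν p, u⟫ = 0) (hv : ⟪ν p, v⟫ = 0) :
    fderiv ℝ (isoQ ν k₁ k₂) p u v = fderiv ℝ (isoQ ν k₁ k₂) p v u := by
  obtain ⟨e, w, F⟩ := D.frame hp
  have hs := D.hs p hp
  have hPe : fderiv ℝ (isoP ν) p u v = fderiv ℝ (isoP ν) p v u := by
    rw [isoP_fderiv ν p hs, isoP_fderiv ν p hs, hu, hv, F.D_apply u hu, F.D_apply v hv]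
    simp only [inner_add_left, inner_smul_left]
    simp only [conj_trivial, zero_smul, add_zero]
    congr 2
    ring
  rw [isoQ_fderiv ν k₁ k₂ p hs, isoQ_fderiv ν k₁ k₂ p hs, hPe, isoP_apply, isoP_apply, hu, hv]
  simp only [zero_smul, sub_zero]
  rw [iso_symm2 ν p hs u v]

theorem IsoData.dQ {f : EuclideanSpace ℝ (Fin 3) → ℝ}
    {ν : EuclideanSpace ℝ (Fin 3) → EuclideanSpace ℝ (Fin 3)} {k₁ k₂ : ℝ}
    (D : IsoData f ν k₁ k₂) (hk : k₁ ≠ k₂) {p : EuclideanSpace ℝ (Fin 3)} (hp : f p = 0)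
    (u a : EuclideanSpace ℝ (Fin 3)) (hu : ⟪ν p, u⟫ = 0) :
    fderiv ℝ (isoQ ν k₁ k₂) p u a =
      -(k₁ • (⟪ν p, a⟫ • isoQ ν k₁ k₂ p u + ⟪isoQ ν k₁ k₂ p u, a⟫ • ν p)) := by
  obtain ⟨e, w, F⟩ := D.frame hp
  have hs := D.hs p hp
  have hQd := (isoQ_smooth ν k₁ k₂ p hs).differentiableAt (by simp)
  have hQa := fun a => iso_hasFDerivAt_apply (isoQ ν k₁ k₂) p a hQd
  set T := fderiv ℝ (isoQ ν k₁ k₂) p with hTdef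
  have tang : ∀ u, ⟪ν p, u⟫ = 0 → fderiv ℝ f p u = 0 := fun u hu =>
    (D.hT p u hp).1 (by rw [real_inner_comm]; exact hu)
  have hb : ∀ u, ⟪ν p, u⟫ = 0 → ∀ a b, ⟪T u a, b⟫ = ⟪a, T u b⟫ := by
    intro u hu a b
    have h := iso_tangential f D.hf p hp (D.hL p hp)
      (fun x => ⟪isoQ ν k₁ k₂ x a, b⟫ - ⟪a, isoQ ν k₁ k₂ x b⟫) _
      (((hQa a).inner ℝ (hasFDerivAt_const b p)).sub
        ((hasFDerivAt_const a p).inner ℝ (hQa b)))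
      (by
        intro x hx
        obtain ⟨e', w', F'⟩ := D.frame hx
        simp only [F'.Q_apply hk, inner_smul_left, inner_smul_right, conj_trivial]
        rw [real_inner_comm a e']; ring) u (tang u hu)
    simp at h
    linarith
  have ha : ∀ u, ⟪ν p, u⟫ = 0 → ∀ a b, ⟪T u a, b⟫ =
      ⟪T u a, isoQ ν k₁ k₂ p b⟫ + ⟪isoQ ν k₁ k₂ p a, T u b⟫ := by
    intro u hu a b
    have h := iso_tangential f D.hf p hp (D.hL p hp)
      (fun x => ⟪isoQ ν k₁ k₂ x a, b⟫ - ⟪isoQ ν k₁ k₂ x a, isoQ ν k₁ k₂ x b⟫) _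
      (((hQa a).inner ℝ (hasFDerivAt_const b p)).sub ((hQa a).inner ℝ (hQa b)))
      (by
        intro x hx
        obtain ⟨e', w', F'⟩ := D.frame hx
        simp only [F'.Q_apply hk, inner_smul_left, inner_smul_right, conj_trivial, F'.ee]
        ring) u (tang u hu)
    simp at h
    linarith
  have hd : ∀ u, ⟪ν p, u⟫ = 0 → T u (ν p) = -(k₁ * ⟪e, u⟫) • e := by
    intro u hu
    have h := iso_tangential f D.hf p hp (D.hL p hp)
      (fun x => isoQ ν k₁ k₂ x (ν x)) _
      (hQd.hasFDerivAt.clm_apply (hs.differentiableAt (by simp)).hasFDerivAt)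
      (by
        intro x hx
        obtain ⟨e', w', F'⟩ := D.frame hx
        rw [F'.Q_apply hk, F'.en, zero_smul]) u (tang u hu)
    simp only [add_apply, ContinuousLinearMap.comp_apply,
      ContinuousLinearMap.flip_apply] at h
    rw [F.D_apply u hu, F.Q_apply hk] at h
    simp only [inner_add_right, inner_smul_right, F.ee, F.ew, mul_one, mul_zero, add_zero] at h
    rw [neg_smul]
    exact eq_neg_of_add_eq_zero_right h
  have hQe : isoQ ν k₁ k₂ p e = e := by rw [F.Q_apply hk, F.ee, one_smul]
  have hQw : isoQ ν k₁ k₂ p w = 0 := by rw [F.Q_apply hk, F.ew, zero_smul]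
  have hee : ∀ u, ⟪ν p, u⟫ = 0 → ⟪e, T u e⟫ = 0 := by
    intro u hu
    have := ha u hu e e
    rw [hQe] at this; linarith
  have hww : ∀ u, ⟪ν p, u⟫ = 0 → ⟪w, T u w⟫ = 0 := by
    intro u hu
    have := ha u hu w w
    rw [hQw, inner_zero_left, inner_zero_right] at this
    rw [real_inner_comm]; linarith
  have hc := D.codazzi hp e w F.ne F.nw
  rw [← hTdef] at hc
  have h1 : ⟪w, T e e⟫ = 0 := by
    rw [real_inner_comm, hb e F.ne, hc]; exact hee w F.nw
  have h2 : ⟪w, T w e⟫ = 0 := by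
    rw [← hc]; exact hww e F.ne
  have hTue : ⟪w, T u e⟫ = 0 := by
    rw [F.expand u, hu]
    simp [inner_add_right, inner_smul_right, h1, h2]
  have hTe : T u e = -(k₁ * ⟪e, u⟫) • ν p := by
    rw [F.expand (T u e), hee u hu, hTue, ← hb u hu, hd u hu, inner_smul_left, F.ee]
    simp
  have hTw : T u w = 0 := by
    rw [F.expand (T u w), hww u hu, ← hb u hu, ← hb u hu, real_inner_comm, hTue, hd u hu,
      inner_smul_left, F.ew]
    simp
  rw [F.expand a, map_add, map_add, map_smul, map_smul, map_smul, hTe, hTw, hd u hu,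
    ← F.expand a, F.Q_apply hk, inner_smul_left]
  simp only [conj_trivial]
  module

theorem IsoData.prod_zero {f : EuclideanSpace ℝ (Fin 3) → ℝ}
    {ν : EuclideanSpace ℝ (Fin 3) → EuclideanSpace ℝ (Fin 3)} {k₁ k₂ : ℝ}
    (D : IsoData f ν k₁ k₂) (hk : k₁ ≠ k₂) {p : EuclideanSpace ℝ (Fin 3)} (hp : f p = 0) :
    k₁ * k₂ = 0 := by
  obtain ⟨e, w, F⟩ := D.frame hp
  have hs := D.hs p hp
  have hQs := isoQ_smooth ν k₁ k₂ p hs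
  have hQd := hQs.differentiableAt (by simp)
  have hPd := (isoP_smooth ν p hs).differentiableAt (by simp)
  have hνd := (hs.differentiableAt (by simp)).hasFDerivAt
  have hQa := fun a => iso_hasFDerivAt_apply (isoQ ν k₁ k₂) p a hQd
  have hPa := fun a => iso_hasFDerivAt_apply (isoP ν) p a hPd
  let q : EuclideanSpace ℝ (Fin 3) → ℝ := fun x => ⟪isoQ ν k₁ k₂ x e, w⟫
  have hq : ContDiffAt ℝ (⊤ : ℕ∞) q p :=
    (hQs.clm_apply contDiffAt_const).inner ℝ contDiffAt_const
  have hqd : ContDiffAt ℝ (⊤ : ℕ∞) (fderiv ℝ q) p := hq.fderiv_right (by simp)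
  have hq1 := (hqd.differentiableAt (by simp)).hasFDerivAt
  have hvan : ∀ u x, f x = 0 → fderiv ℝ q x (isoP ν x u) +
      k₁ * (⟪ν x, e⟫ * ⟪isoQ ν k₁ k₂ x u, w⟫ + ⟪isoQ ν k₁ k₂ x u, e⟫ * ⟪ν x, w⟫) = 0 := by
    intro u x hx
    obtain ⟨e', w', F'⟩ := D.frame hx
    have h1 := iso_hasFDerivAt_apply (isoQ ν k₁ k₂) x e
      ((isoQ_smooth ν k₁ k₂ x (D.hs x hx)).differentiableAt (by simp))
    have h2 : fderiv ℝ q x = _ := (h1.inner ℝ (hasFDerivAt_const w x)).fderiv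
    have h3 : ⟪ν x, isoP ν x u⟫ = 0 := by
      rw [F'.P_apply, inner_add_right, inner_smul_right, inner_smul_right, F'.ne, F'.nw]; simp
    have h4 : isoQ ν k₁ k₂ x (isoP ν x u) = isoQ ν k₁ k₂ x u := by
      rw [F'.Q_apply hk, F'.Q_apply hk, F'.P_apply, inner_add_right, inner_smul_right,
        inner_smul_right, F'.ee, F'.ew]; simp
    rw [h2]
    simp
    rw [D.dQ hk hx _ e h3, h4]
    simp only [inner_add_left, inner_neg_left, inner_smul_left, conj_trivial]
    ring
  have hder : ∀ u v, ⟪ν p, v⟫ = 0 → ⟪ν p, u⟫ = 0 →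
      fderiv ℝ q p (fderiv ℝ (isoP ν) p v u) + fderiv ℝ (fderiv ℝ q) p v u +
      k₁ * (⟪fderiv ℝ ν p v, e⟫ * ⟪isoQ ν k₁ k₂ p u, w⟫ +
        ⟪isoQ ν k₁ k₂ p u, e⟫ * ⟪fderiv ℝ ν p v, w⟫) = 0 := by
    intro u v hv hu
    have h := iso_tangential f D.hf p hp (D.hL p hp) _ _
      ((hq1.clm_apply (hPa u)).add ((((hνd.inner ℝ (hasFDerivAt_const e p)).mul
        ((hQa u).inner ℝ (hasFDerivAt_const w p))).add
        (((hQa u).inner ℝ (hasFDerivAt_const e p)).mul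
        (hνd.inner ℝ (hasFDerivAt_const w p)))).const_mul k₁)) (hvan u) v
      ((D.hT p v hp).1 (by rw [real_inner_comm]; exact hv))
    have hPu : isoP ν p u = u := by rw [isoP_apply, hu]; simp
    simp [F.ne, F.nw, hPu] at h
    rw [← h]
    ring
  have e1 := hder e w F.nw F.ne
  have e2 := hder w e F.ne F.nw
  rw [isoP_fderiv ν p hs] at e1 e2
  simp only [F.Q_apply hk, F.De, F.Dw, inner_smul_left, F.ee, F.ew, F.we, F.ww, F.ne, F.nw,
    conj_trivial] at e1 e2
  have e3 := iso_symm2 q p hq e w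
  simp at e1 e2
  rcases e1 with e1
  rw [e3] at e2
  rw [e2] at e1
  simpa using e1

theorem iso_infDist (c d q : EuclideanSpace ℝ (Fin 3)) (hd : ‖d‖ = 1) (hdc : ⟪d, c⟫ = 0) :
    Metric.infDist q {x | ∃ t : ℝ, x = c + t • d} = ‖q - ⟪d, q⟫ • d - c‖ := by
  have hdd : ⟪d, d⟫ = 1 := by simp [hd]
  apply le_antisymm
  · have h := Metric.infDist_le_dist_of_mem (x := q) (s := {x | ∃ t : ℝ, x = c + t • d})
      (y := c + ⟪d, q⟫ • d) ⟨_, rfl⟩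
    refine h.trans (le_of_eq ?_)
    rw [dist_eq_norm]; congr 1; abel
  · have hne : {x | ∃ t : ℝ, x = c + t • d}.Nonempty := ⟨c, 0, by simp⟩
    rw [Metric.le_infDist hne]
    rintro y ⟨t, rfl⟩
    rw [dist_eq_norm]
    apply le_of_sq_le_sq _ (norm_nonneg _)
    have h1 : q - (c + t • d) = (q - ⟪d, q⟫ • d - c) + (⟪d, q⟫ - t) • d := by module
    have h2 : ⟪q - ⟪d, q⟫ • d - c, d⟫ = 0 := by
      rw [inner_sub_left, inner_sub_left, inner_smul_left, hdd, real_inner_comm d c,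
        real_inner_comm d q, hdc]
      simp
    rw [h1, norm_add_sq_real, inner_smul_right, h2, norm_smul, hd]
    have := sq_nonneg (‖⟪d, q⟫ - t‖ * 1)
    linarith

theorem IsoData.umbilic {f : EuclideanSpace ℝ (Fin 3) → ℝ}
    {ν : EuclideanSpace ℝ (Fin 3) → EuclideanSpace ℝ (Fin 3)} {k : ℝ}
    (D : IsoData f ν k k) (M : Set (EuclideanSpace ℝ (Fin 3))) (hM : ∀ x, x ∈ M ↔ f x = 0)
    (hconn : IsPreconnected M) (p₀ : EuclideanSpace ℝ (Fin 3)) (hp₀ : p₀ ∈ M) :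
    (∃ (a n : EuclideanSpace ℝ (Fin 3)), ‖n‖ = 1 ∧ M = {p | ⟪p - a, n⟫ = 0})
    ∨ (∃ (c : EuclideanSpace ℝ (Fin 3)) (r : ℝ), 0 < r ∧ M = Metric.sphere c r) := by
  have hL : ∀ p ∈ M, fderiv ℝ f p ≠ 0 := fun p hp => D.hL p ((hM p).1 hp)
  have hp₀' := (hM _).1 hp₀
  have hconst := iso_const f D.hf M hM hconn hL (fun x => k • x - ν x) (by
    intro p hp
    have hp' := (hM p).1 hp
    obtain ⟨e, w, F⟩ := D.frame hp'
    refine ⟨_, ((hasFDerivAt_id p).const_smul k).sub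
      ((D.hs p hp').differentiableAt (by simp)).hasFDerivAt, ?_⟩
    intro u hu
    have hu' : ⟪ν p, u⟫ = 0 := by rw [real_inner_comm]; exact (D.hT p u hp').2 hu
    have hexp := F.expand u
    rw [hu', zero_smul, add_zero] at hexp
    have h2 : k • u = (k * ⟪e, u⟫) • e + (k * ⟪w, u⟫) • w := by
      conv_lhs => rw [hexp]
      module
    simp [F.D_apply u hu', h2])
  by_cases hk : k = 0
  · left
    subst hk
    have hνc : ∀ p ∈ M, ν p = ν p₀ := by
      intro p hp
      have := hconst p hp p₀ hp₀
      simpa using this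
    have hplane := iso_const f D.hf M hM hconn hL (fun x => ⟪x, ν p₀⟫) (by
      intro p hp
      refine ⟨_, (hasFDerivAt_id p).inner ℝ (hasFDerivAt_const (ν p₀) p), ?_⟩
      intro u hu
      have := (D.hT p u ((hM p).1 hp)).2 hu
      rw [hνc p hp] at this
      simpa using this)
    refine ⟨p₀, ν p₀, D.h1 _ hp₀', ?_⟩
    ext q
    simp only [Set.mem_ofPred_eq]
    constructor
    · intro hq
      rw [inner_sub_left, sub_eq_zero]
      exact hplane q hq p₀ hp₀
    · intro hq
      have := iso_flow f D.hf D.hL (fun _ => q - p₀) contDiff_const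
        (fun p hp => (D.hT p _ hp).1 (by rw [hνc p ((hM p).2 hp)]; exact hq))
        (fun t => p₀ + t • (q - p₀))
        (by
          intro s
          have := ((hasDerivAt_id s).smul_const (q - p₀)).const_add p₀
          simpa using this) (by simpa using hp₀') 1
      rw [hM]
      simpa using this
  · right
    set c := k⁻¹ • (k • p₀ - ν p₀) with hc
    have hform : ∀ p, f p = 0 → k⁻¹ • ν p = p - c := by
      intro p hp
      have h := hconst p ((hM p).2 hp) p₀ hp₀
      rw [hc, ← h, smul_sub, smul_smul, inv_mul_cancel₀ hk, one_smul]
      abel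
    refine ⟨c, |k|⁻¹, inv_pos.2 (abs_pos.2 hk), ?_⟩
    ext q
    rw [mem_sphere_iff_norm, hM]
    constructor
    · intro hq
      rw [← hform q hq, norm_smul, D.h1 q hq, norm_inv, Real.norm_eq_abs, mul_one]
    · intro hq
      exact iso_full f D.hf D.hL ν D.h1 (fun p u hp h => (D.hT p u hp).1 h) 0 c p₀ k hk hp₀'
        (Or.inr rfl) (by simp) (by simp) (by simpa using hform) q (by simpa using hq)

theorem IsoData.cylinder {f : EuclideanSpace ℝ (Fin 3) → ℝ}
    {ν : EuclideanSpace ℝ (Fin 3) → EuclideanSpace ℝ (Fin 3)} {k : ℝ}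
    (D : IsoData f ν k 0) (hk : k ≠ 0) (M : Set (EuclideanSpace ℝ (Fin 3)))
    (hM : ∀ x, x ∈ M ↔ f x = 0)
    (hconn : IsPreconnected M) (p₀ : EuclideanSpace ℝ (Fin 3)) (hp₀ : p₀ ∈ M) :
    ∃ (a d : EuclideanSpace ℝ (Fin 3)) (r : ℝ), 0 < r ∧ ‖d‖ = 1 ∧
        M = {p | Metric.infDist p {x | ∃ t : ℝ, x = a + t • d} = r} := by
  have hL : ∀ p ∈ M, fderiv ℝ f p ≠ 0 := fun p hp => D.hL p ((hM p).1 hp)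
  have hp₀' := (hM _).1 hp₀
  have hDQ : ∀ p u, f p = 0 → ⟪ν p, u⟫ = 0 → fderiv ℝ ν p u = k • isoQ ν k 0 p u := by
    intro p u hp hu
    obtain ⟨e, w, F⟩ := D.frame hp
    rw [F.D_apply u hu, F.Q_apply hk]
    module
  have hR := iso_const f D.hf M hM hconn hL (fun x => isoP ν x - isoQ ν k 0 x) (by
    intro p hp
    have hp' := (hM p).1 hp
    refine ⟨_, ((isoP_smooth ν p (D.hs p hp')).differentiableAt (by simp)).hasFDerivAt.sub
      ((isoQ_smooth ν k 0 p (D.hs p hp')).differentiableAt (by simp)).hasFDerivAt, ?_⟩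
    intro u hu
    have hu' : ⟪ν p, u⟫ = 0 := by rw [real_inner_comm]; exact (D.hT p u hp').2 hu
    apply ContinuousLinearMap.ext
    intro a
    rw [sub_apply, sub_apply, isoP_fderiv ν p (D.hs p hp'), D.dQ hk hp' u a hu',
      hDQ p u hp' hu', inner_smul_left]
    simp only [conj_trivial, zero_apply]
    module)
  obtain ⟨e₀, d, F₀⟩ := D.frame hp₀'
  have hd1 : ‖d‖ = 1 := by
    have := F₀.ww
    rw [real_inner_self_eq_norm_sq] at this
    nlinarith [norm_nonneg d]
  have hR' : ∀ p, f p = 0 → ∀ a, isoP ν p a - isoQ ν k 0 p a = ⟪d, a⟫ • d := by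
    intro p hp a
    have h := congrArg (fun A => A a) (hR p ((hM p).2 hp) p₀ hp₀)
    simp only [sub_apply] at h
    rw [h, F₀.P_apply, F₀.Q_apply hk]
    abel
  have hdν : ∀ p, f p = 0 → ⟪d, ν p⟫ = 0 := by
    intro p hp
    obtain ⟨e, w, F⟩ := D.frame hp
    have h := hR' p hp (ν p)
    rw [F.P_apply, F.Q_apply hk, F.en, F.wn] at h
    have h2 : ⟪d, ν p⟫ • d = 0 := by rw [← h]; simp
    rcases smul_eq_zero.1 h2 with h3 | h3
    · exact h3
    · rw [h3, norm_zero] at hd1; norm_num at hd1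
  have hconst := iso_const f D.hf M hM hconn hL (fun x => x - ⟪d, x⟫ • d - k⁻¹ • ν x) (by
    intro p hp
    have hp' := (hM p).1 hp
    refine ⟨_, ((hasFDerivAt_id p).sub
      (((hasFDerivAt_const d p).inner ℝ (hasFDerivAt_id p)).smul_const d)).sub
      (((D.hs p hp').differentiableAt (by simp)).hasFDerivAt.const_smul k⁻¹), ?_⟩
    intro u hu
    have hu' : ⟪ν p, u⟫ = 0 := by rw [real_inner_comm]; exact (D.hT p u hp').2 hu
    have h := hR' p hp' u
    rw [isoP_apply, hu', zero_smul, sub_zero] at h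
    simp [hDQ p u hp' hu', hk]
    rw [← h]; abel)
  set c := p₀ - ⟪d, p₀⟫ • d - k⁻¹ • ν p₀ with hc
  have hform : ∀ p, f p = 0 → k⁻¹ • ν p = p - ⟪d, p⟫ • d - c := by
    intro p hp
    have h := hconst p ((hM p).2 hp) p₀ hp₀
    rw [← hc] at h
    rw [← h]; abel
  have hdc : ⟪d, c⟫ = 0 := by
    rw [hc, inner_sub_right, inner_sub_right, inner_smul_right, inner_smul_right, F₀.ww,
      hdν _ hp₀']
    simp
  refine ⟨c, d, |k|⁻¹, inv_pos.2 (abs_pos.2 hk), hd1, ?_⟩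
  ext q
  rw [Set.mem_ofPred_eq, iso_infDist c d q hd1 hdc, hM]
  constructor
  · intro hq
    rw [← hform q hq, norm_smul, D.h1 q hq, norm_inv, Real.norm_eq_abs, mul_one]
  · intro hq
    exact iso_full f D.hf D.hL ν D.h1 (fun p u hp h => (D.hT p u hp).1 h) d c p₀ k hk hp₀'
      (Or.inl F₀.ww) hdc hdν hform q hq

/-- Segre's theorem in ℝ³: a connected complete isoparametric surface
(realized as a regular level set `M = f⁻¹(0)` with unit normal `ν = ∇f/|∇f|`,
whose principal curvatures — the eigenvalues of the Weingarten map `dν` on an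
orthonormal pair of tangent eigenvectors — are constants `k₁, k₂` on `M`) is
a plane, a round sphere, or a round circular cylinder. -/
theorem stmt_16 (f : EuclideanSpace ℝ (Fin 3) → ℝ) (hf : ContDiff ℝ (⊤ : ℕ∞) f)
    (M : Set (EuclideanSpace ℝ (Fin 3))) (hM : M = f ⁻¹' {0})
    (hne : M.Nonempty) (hconn : IsConnected M)
    (hreg : ∀ p ∈ M, gradient f p ≠ 0)
    (ν : EuclideanSpace ℝ (Fin 3) → EuclideanSpace ℝ (Fin 3))
    (hν : ∀ p, ν p = ‖gradient f p‖⁻¹ • gradient f p)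
    (k₁ k₂ : ℝ)
    (hcurv : ∀ p ∈ M, ∃ e₁ e₂ : EuclideanSpace ℝ (Fin 3),
      ‖e₁‖ = 1 ∧ ‖e₂‖ = 1 ∧ ⟪e₁, e₂⟫ = 0 ∧ ⟪e₁, ν p⟫ = 0 ∧ ⟪e₂, ν p⟫ = 0 ∧
      fderiv ℝ ν p e₁ = k₁ • e₁ ∧ fderiv ℝ ν p e₂ = k₂ • e₂) :
    (∃ (a n : EuclideanSpace ℝ (Fin 3)), ‖n‖ = 1 ∧
        M = {p | ⟪p - a, n⟫ = 0})
    ∨ (∃ (c : EuclideanSpace ℝ (Fin 3)) (r : ℝ), 0 < r ∧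
        M = Metric.sphere c r)
    ∨ (∃ (a d : EuclideanSpace ℝ (Fin 3)) (r : ℝ), 0 < r ∧ ‖d‖ = 1 ∧
        M = {p | Metric.infDist p {x | ∃ t : ℝ, x = a + t • d} = r}) := by
  have hmem : ∀ x, x ∈ M ↔ f x = 0 := by intro x; rw [hM]; simp
  have hinner : ∀ p u, ⟪gradient f p, u⟫ = fderiv ℝ f p u := by
    intro p u
    rw [← toDual_gradient, InnerProductSpace.toDual_apply_apply]
  have hgs : ContDiff ℝ (⊤ : ℕ∞) (gradient f) := by
    have h1 : ContDiff ℝ (⊤ : ℕ∞) (fderiv ℝ f) := hf.fderiv_right (by simp)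
    exact (InnerProductSpace.toDual ℝ
      (EuclideanSpace ℝ (Fin 3))).symm.toContinuousLinearEquiv.contDiff.comp h1
  have hνeq : ν = fun p => ‖gradient f p‖⁻¹ • gradient f p := funext hν
  have D : IsoData f ν k₁ k₂ := by
    refine ⟨hf, ?_, ?_, ?_, ?_, ?_⟩
    · intro p hp h
      apply hreg p ((hmem p).2 hp)
      apply ext_inner_right ℝ
      intro u
      rw [hinner, h]; simp
    · intro p hp
      have h0 := hreg p ((hmem p).2 hp)
      rw [hνeq]
      exact ((hgs.contDiffAt.norm ℝ h0).inv (norm_ne_zero_iff.2 h0)).smul hgs.contDiffAt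
    · intro p hp
      have h0 := norm_ne_zero_iff.2 (hreg p ((hmem p).2 hp))
      rw [hν, norm_smul, norm_inv, norm_norm, inv_mul_cancel₀ h0]
    · intro p u hp
      have h0 := norm_ne_zero_iff.2 (hreg p ((hmem p).2 hp))
      rw [hν, inner_smul_right, real_inner_comm, hinner]
      simp [h0]
    · intro p hp
      exact hcurv p ((hmem p).2 hp)
  obtain ⟨p₀, hp₀⟩ := hne
  by_cases hk : k₁ = k₂
  · subst hk
    rcases D.umbilic M hmem hconn.isPreconnected p₀ hp₀ with h | h
    · exact Or.inl h
    · exact Or.inr (Or.inl h)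
  · right; right
    rcases mul_eq_zero.1 (D.prod_zero hk ((hmem _).1 hp₀)) with h | h
    · subst h
      have D' : IsoData f ν k₂ 0 := by
        refine ⟨D.hf, D.hL, D.hs, D.h1, D.hT, ?_⟩
        intro p hp
        obtain ⟨e, w, a1, a2, a3, a4, a5, a6, a7⟩ := D.hcurv p hp
        exact ⟨w, e, a2, a1, by rw [real_inner_comm]; exact a3, a5, a4, a7, a6⟩
      exact D'.cylinder (Ne.symm hk) M hmem hconn.isPreconnected p₀ hp₀
    · subst h
      exact D.cylinder hk M hmem hconn.isPreconnected p₀ hp₀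
end
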